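/- arXiv:1604.08797 — 2 statements merged into one kernel-verified Lean document; each statement's English description precedes it below -/
import Mathlib

section
/- A simple 1-planar graph on n ≥ 3 vertices has at most 4n − 8 edges. -/
/-- A simple drawing of a graph in the plane: vertices are mapped to distinct points,
each edge to a Jordan arc between the points of its endpoints whose interior avoids
all vertex points, and two distinct arcs share at most one point. -/
structure SimpleDrawing {V : Type*} (G : SimpleGraph V) where
  pos : V → ℝ × ℝ
  pos_inj : Function.Injective pos
  curve : G.edgeSet → ℝ → ℝ × ℝ
  curve_cont : ∀ e, ContinuousOn (curve e) (Set.Icc 0 1)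
  curve_inj : ∀ e, Set.InjOn (curve e) (Set.Icc 0 1)
  curve_ends : ∀ (e : G.edgeSet) (u v : V), (e : Sym2 V) = s(u, v) →
    (curve e 0 = pos u ∧ curve e 1 = pos v) ∨ (curve e 0 = pos v ∧ curve e 1 = pos u)
  curve_avoid : ∀ (e : G.edgeSet) (t : ℝ), t ∈ Set.Ioo (0:ℝ) 1 →
    curve e t ∉ Set.range pos
  simple : ∀ e f : G.edgeSet, e ≠ f →
    Set.Subsingleton (curve e '' Set.Icc 0 1 ∩ curve f '' Set.Icc 0 1)

/-- The interior of the arc of an edge. -/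
def SimpleDrawing.interiorArc {V : Type*} {G : SimpleGraph V} (D : SimpleDrawing G)
    (e : G.edgeSet) : Set (ℝ × ℝ) :=
  D.curve e '' Set.Ioo 0 1

/-- Two edges cross if they are distinct and their arcs share an interior point. -/
def SimpleDrawing.Crosses {V : Type*} {G : SimpleGraph V} (D : SimpleDrawing G)
    (e f : G.edgeSet) : Prop :=
  e ≠ f ∧ (D.interiorArc e ∩ D.interiorArc f).Nonempty

/-- A drawing is 1-plane if each edge is crossed at most once,
i.e. crosses at most one other edge. -/
def SimpleDrawing.IsOnePlane {V : Type*} {G : SimpleGraph V} (D : SimpleDrawing G) : Prop :=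
  ∀ e : G.edgeSet, {f : G.edgeSet | D.Crosses e f}.Subsingleton

/-- A drawing is plane (crossing-free) if no two edges cross. -/
def SimpleDrawing.IsPlane {V : Type*} {G : SimpleGraph V} (D : SimpleDrawing G) : Prop :=
  ∀ e f : G.edgeSet, ¬ D.Crosses e f
section CoreAlg
open Finset

theorem op_half2 {W R : Type*} [Fintype W] [LinearOrder W] [CommRing R] (h : W → W → R)
    (h0 : ∀ i, h i i = 0) :
    ∑ i, ∑ j, h i j = ∑ i, ∑ j, if i < j then h i j + h j i else 0 := by
  have e : ∀ i j, h i j = (if i < j then h i j else 0) + (if j < i then h i j else 0) := by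
    intro i j
    rcases lt_trichotomy i j with hlt | rfl | hlt
    · simp [hlt, not_lt_of_gt hlt]
    · simp [h0]
    · simp [hlt, not_lt_of_gt hlt]
  have e2 : ∀ i j, (if i < j then h i j + h j i else 0)
      = (if i < j then h i j else 0) + (if i < j then h j i else 0) := by
    intro i j; split_ifs <;> simp
  simp_rw [e2, sum_add_distrib]
  rw [sum_congr rfl (fun i _ => sum_congr rfl (fun j _ => e i j))]
  simp_rw [sum_add_distrib]
  congr 1
  rw [sum_comm]

theorem op_half4 {W R : Type*} [Fintype W] [LinearOrder W] [CommRing R] (H : W → W → W → W → R)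
    (h0 : ∀ i k l, H i i k l = 0) (h1 : ∀ i j k, H i j k k = 0) :
    ∑ i, ∑ j, ∑ k, ∑ l, H i j k l = ∑ i, ∑ j, if i < j then ∑ k, ∑ l,
      (if k < l then H i j k l + H i j l k + H j i k l + H j i l k else 0) else 0 := by
  rw [op_half2 (fun i j => ∑ k, ∑ l, H i j k l) (by simp [h0])]
  refine sum_congr rfl fun i _ => sum_congr rfl fun j _ => ?_
  split_ifs with hij
  · rw [op_half2 _ (h1 i j), op_half2 _ (h1 j i)]
    simp_rw [← sum_add_distrib]
    refine sum_congr rfl fun k _ => sum_congr rfl fun l _ => ?_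
    split_ifs <;> ring
  · rfl

set_option maxHeartbeats 1000000 in
theorem op_core {W R : Type*} [Fintype W] [LinearOrder W] [CommRing R] [CharP R 2]
    (w : W → W → R) (wsym : ∀ i j, w i j = w j i) (w0 : ∀ i, w i i = 0)
    (n : W → W → W → R) (nsym : ∀ i j v, n i j v = n j i v)
    (hn : ∀ i j k l, w i j ≠ 0 → w k l ≠ 0 → i ≠ k → i ≠ l → j ≠ k → j ≠ l →
      n i j k + n i j l + n k l i + n k l j =
        (if i < k then 1 else 0) + (if i < l then 1 else 0) + (if j < k then 1 else 0)
          + (if j < l then 1 else 0))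
    (P : W → W → W → W → R) (Ps1 : ∀ i j k l, P i j k l = P j i k l)
    (Ps2 : ∀ i j k l, P i j k l = P i j l k)
    (st1 : ∀ i k l, ∑ j, w i j * P i j k l = 0)
    (st2 : ∀ i j k, ∑ l, w k l * P i j k l = 0)
    (Pd : ∀ i j, w i j ≠ 0 → P i j i j = 0)
    (psi : W → W → R)
    (Psh : ∀ i j l, w i j ≠ 0 → w i l ≠ 0 → P i j i l = psi i j + psi i l)
    (st0 : ∀ i, ∑ j, w i j = 0) :
    ∑ i, ∑ j, w i j ^ 2 * psi i j = 0 := by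
  have two : (2 : R) = 0 := CharTwo.two_eq_zero
  let χ : W → W → R := fun x y => if x < y then 1 else 0
  let M : W → W → W → W → R := fun i j k l => (χ i k + χ i l + χ j k + χ j l) +
    (n i j k + n i j l + n k l i + n k l j)
  let T : W → W → W → W → R := fun i j k l => w i j * w k l * P i j k l
  have T1 : ∀ i j k l, T j i k l = T i j k l := fun i j k l => by
    simp only [T]; rw [wsym j i, Ps1 j i]
  have T2 : ∀ i j k l, T i j l k = T i j k l := fun i j k l => by
    simp only [T]; rw [wsym l k, Ps2 i j l k]
  have S1 : ∑ i, ∑ j, ∑ k, ∑ l, χ i k * T i j k l = 0 := by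
    refine sum_eq_zero fun i _ => sum_eq_zero fun j _ => sum_eq_zero fun k _ => ?_
    calc ∑ l, χ i k * T i j k l = χ i k * w i j * ∑ l, w k l * P i j k l := by
          rw [mul_sum]; refine sum_congr rfl fun l _ => ?_
          simp only [T]; ring
      _ = 0 := by rw [st2, mul_zero]
  rw [op_half4 _ (by simp [T, w0]) (by simp [T, w0])] at S1
  have S2 : ∑ i, ∑ j, (if i < j then ∑ k, ∑ l, n i j k * (T i j k l + T k l i j) else 0) = 0 := by
    refine sum_eq_zero fun i _ => sum_eq_zero fun j _ => ?_
    split_ifs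
    swap
    · rfl
    refine sum_eq_zero fun k _ => ?_
    calc ∑ l, n i j k * (T i j k l + T k l i j)
        = n i j k * w i j * (∑ l, w k l * P i j k l + ∑ l, w k l * P k l i j) := by
          rw [← sum_add_distrib, mul_sum]; refine sum_congr rfl fun l _ => ?_
          simp only [T]; ring
      _ = 0 := by rw [st2, st1]; ring
  have S2' : ∑ i, ∑ j, (if i < j then ∑ k, ∑ l, (if k < l then
      T i j k l * (n i j k + n i j l + n k l i + n k l j) else 0) else 0) = 0 := by
    have e1 : ∀ i j, ∑ k, ∑ l, n i j k * (T i j k l + T k l i j) =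
        ∑ k, ∑ l, (if k < l then (n i j k + n i j l) * T i j k l else 0) +
        ∑ k, ∑ l, (if k < l then (n i j k + n i j l) * T k l i j else 0) := by
      intro i j
      rw [op_half2 _ (by simp [T, w0])]
      simp_rw [← sum_add_distrib]
      refine sum_congr rfl fun k _ => sum_congr rfl fun l _ => ?_
      rw [T2 i j k l, T1 k l i j]
      split_ifs <;> ring
    have e2 : ∑ i, ∑ j, (if i < j then
        ∑ k, ∑ l, (if k < l then (n i j k + n i j l) * T k l i j else 0) else 0) =
        ∑ i, ∑ j, (if i < j then
        ∑ k, ∑ l, (if k < l then (n k l i + n k l j) * T i j k l else 0) else 0) := by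
      have a1 : ∀ f : W → W → W → W → R, ∑ i, ∑ j, (if i < j then
        ∑ k, ∑ l, (if k < l then f i j k l else 0) else 0) =
          ∑ x : W × W, ∑ y : W × W, if x.1 < x.2 ∧ y.1 < y.2 then f x.1 x.2 y.1 y.2 else 0 := by
        intro f
        rw [Fintype.sum_prod_type]
        refine sum_congr rfl fun i _ => sum_congr rfl fun j _ => ?_
        rw [Fintype.sum_prod_type]
        by_cases hij : i < j <;> simp [hij]
      rw [a1, a1, sum_comm]
      refine sum_congr rfl fun i _ => sum_congr rfl fun j _ => ?_
      simp only [and_comm]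
    refine Eq.trans ?_ S2
    have e3 : ∀ i j, (if i < j then ∑ k, ∑ l, n i j k * (T i j k l + T k l i j) else 0) =
       (if i < j then ∑ k, ∑ l, (if k < l then (n i j k + n i j l) * T i j k l else 0) else 0) +
       (if i < j then ∑ k, ∑ l, (if k < l then (n i j k + n i j l) * T k l i j else 0) else 0) := by
      intro i j; rw [e1]; split_ifs <;> simp
    simp_rw [e3]
    simp_rw [sum_add_distrib]
    rw [e2]
    simp_rw [← sum_add_distrib]
    refine sum_congr rfl fun i _ => sum_congr rfl fun j _ => ?_
    by_cases hij : i < j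
    · simp only [hij, if_true]
      simp_rw [← sum_add_distrib]
      refine sum_congr rfl fun k _ => sum_congr rfl fun l _ => ?_
      split_ifs <;> ring
    · simp [hij]
  let K : W → W → W → W → R := fun i j k l => T i j k l * M i j k l
  have K1 : ∀ i j k l, K j i k l = K i j k l := fun i j k l => by
    simp only [K, M]; rw [T1, nsym j i k, nsym j i l]; ring
  have K2 : ∀ i j k l, K i j l k = K i j k l := fun i j k l => by
    simp only [K, M]; rw [T2, nsym l k i, nsym l k j]; ring
  have Kd : ∀ i j, K i j i j = 0 := fun i j => by
    by_cases h : w i j = 0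
    · simp [K, T, h]
    · simp [K, T, Pd i j h]
  have Kdis : ∀ i j k l, i ≠ k → i ≠ l → j ≠ k → j ≠ l → K i j k l = 0 := by
    intro i j k l h1 h2 h3 h4
    by_cases h : w i j = 0
    · simp [K, T, h]
    by_cases h' : w k l = 0
    · simp [K, T, h']
    have := hn i j k l h h' h1 h2 h3 h4
    have hM : M i j k l = 0 := by
      simp only [M, χ]; rw [this]; linear_combination
        ((if i < k then (1:R) else 0) + (if i < l then 1 else 0) + (if j < k then 1 else 0)
          + (if j < l then 1 else 0)) * two
    simp [K, hM]
  have SK : ∑ i, ∑ j, (if i < j then ∑ k, ∑ l, (if k < l then K i j k l else 0) else 0) = 0 := by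
    have := congrArg₂ (· + ·) S1 S2'
    simp only [add_zero] at this
    refine Eq.trans ?_ this
    simp_rw [← sum_add_distrib]
    refine sum_congr rfl fun i _ => sum_congr rfl fun j _ => ?_
    by_cases hij : i < j
    · simp only [hij, if_true]
      simp_rw [← sum_add_distrib]
      refine sum_congr rfl fun k _ => sum_congr rfl fun l _ => ?_
      rw [T2 i j k l, T2 j i k l, T1 i j k l]
      split_ifs
      · simp only [K, M]; ring
      · ring
    · simp [hij]
  have SK2 : ∑ i, ∑ j, ∑ k, ∑ l, (if i = k then K i j k l else 0) = 0 := by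
    rw [op_half4 _ (by simp [K, T, w0]) (by simp [K, T, w0])]
    refine Eq.trans ?_ SK
    refine sum_congr rfl fun i _ => sum_congr rfl fun j _ => ?_
    split_ifs with hij
    swap
    · rfl
    refine sum_congr rfl fun k _ => sum_congr rfl fun l _ => ?_
    by_cases hkl : k < l
    swap
    · simp only [if_neg hkl]
    simp only [if_pos hkl]
    rw [K2 i j k l, K2 j i k l, K1 i j k l]
    by_cases a1 : i = k
    · subst a1
      have b1 : i ≠ l := hkl.ne
      have b2 : j ≠ i := hij.ne'
      by_cases a2 : j = l
      · subst a2; simp only [Kd]; simp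
      · simp [b1, b2, a2]
    by_cases a2 : i = l
    · subst a2
      have b1 : j ≠ k := (hkl.trans hij).ne'
      have b2 : j ≠ i := hij.ne'
      simp [a1, b1, b2]
    by_cases a3 : j = k
    · subst a3
      have b1 : j ≠ l := hkl.ne
      simp [a1, a2, b1]
    by_cases a4 : j = l
    · subst a4; simp [a1, a2, a3]
    simp [a1, a2, a3, a4, Kdis i j k l a1 a2 a3 a4]
  have SK3 : ∑ i, ∑ j, ∑ l, K i j i l = 0 := by
    refine Eq.trans ?_ SK2
    refine sum_congr rfl fun i _ => sum_congr rfl fun j _ => ?_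
    rw [sum_comm]
    refine sum_congr rfl fun l _ => ?_
    simp
  have key : ∀ i, ∑ j, ∑ l, K i j i l = ∑ j, w i j ^ 2 * psi i j := by
    intro i
    let Mz : W → W → R := fun j l => if j = l then 0 else M i j i l
    have b1 : ∀ j l, K i j i l = w i j * w i l * (psi i j) * Mz j l
        + w i j * w i l * (psi i l) * Mz j l := by
      intro j l
      by_cases h : w i j = 0
      · simp [K, T, h]
      by_cases h' : w i l = 0
      · simp [K, T, h']
      by_cases hjl : j = l
      · subst hjl; simp [Mz, Kd]
      simp only [K, T, Mz, if_neg hjl, Psh i j l h h']; ring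
    simp_rw [b1, sum_add_distrib]
    rw [sum_comm (f := fun j l => w i j * w i l * (psi i l) * Mz j l)]
    simp_rw [← sum_add_distrib]
    have b2 : ∀ j l, w i j * w i l * (psi i j) * Mz j l + w i l * w i j * psi i j * Mz l j
        = w i j * psi i j * w i l - (if j = l then w i j ^ 2 * psi i j else 0) := by
      intro j l
      by_cases h : w i j = 0
      · simp [h]
      by_cases h' : w i l = 0
      · by_cases hjl : j = l
        · subst hjl; exact absurd h' h
        · simp [h', hjl]
      by_cases hjl : j = l
      · subst hjl; simp [Mz]; ring
      have hij : i ≠ j := by rintro rfl; exact h (w0 _)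
      have hil : i ≠ l := by rintro rfl; exact h' (w0 _)
      have c : ∀ x y : W, x ≠ y → χ x y + χ y x = 1 := by
        intro x y hxy
        rcases lt_or_gt_of_ne hxy with hh | hh <;> simp [χ, hh, not_lt_of_gt hh]
      have c0 : χ i i = 0 := by simp [χ]
      have m : M i j i l + M i l i j = 1 := by
        simp only [M]
        linear_combination c i j hij + c i l hil + c j l hjl +
          (n i j i + n i j l + n i l i + n i l j + χ i i + 1) * two
      simp only [Mz, if_neg hjl, if_neg (Ne.symm hjl)]
      linear_combination w i j * w i l * psi i j * m
    simp_rw [b2, sum_sub_distrib, ← mul_sum, st0]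
    simp
    exact (CharTwo.neg_eq _)
  simp_rw [key] at SK3
  exact SK3
end CoreAlg
section DerPart
open MvPolynomial

theorem op_px {W : Type*} [DecidableEq W] (a s : W) :
    pderiv a (X s : MvPolynomial W (ZMod 2)) = if s = a then 1 else 0 := by
  rw [pderiv_X, Pi.single_apply]

theorem op_dd0 {W : Type*} [DecidableEq W] (a b s t : W) (k : ℕ) (hab : a ≠ b)
    (h1 : ¬ (s = a ∧ t = b)) (h2 : ¬ (s = b ∧ t = a)) (hst : s ≠ t) :
    pderiv a (pderiv b (X s ^ k * X t : MvPolynomial W (ZMod 2))) = 0 := by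
  by_cases c1 : s = a
  · subst c1
    have c2 : t ≠ b := fun h => h1 ⟨rfl, h⟩
    simp [Derivation.leibniz, Derivation.leibniz_pow, op_px, c2, hab]
  · by_cases c3 : t = a
    · subst c3
      have c2 : s ≠ b := fun h => h2 ⟨h, rfl⟩
      simp [Derivation.leibniz, Derivation.leibniz_pow, op_px, c2, hab]
    · simp only [Derivation.leibniz, Derivation.leibniz_pow, op_px]
      split_ifs <;> simp [Derivation.leibniz, Derivation.leibniz_pow, op_px, c1, c3]

theorem op_dd1 {W : Type*} [DecidableEq W] (s t : W) (hst : s ≠ t) :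
    pderiv s (pderiv t (X s ^ 3 * X t + X t ^ 3 * X s: MvPolynomial W (ZMod 2))) ≠ 0 := by
  have two : (2 : MvPolynomial W (ZMod 2)) = 0 := CharTwo.two_eq_zero
  have : pderiv s (pderiv t (X s ^ 3 * X t + X t ^ 3 * X s: MvPolynomial W (ZMod 2)))
      = (X s + X t) ^ 2 := by
    simp only [map_add, Derivation.leibniz, Derivation.leibniz_pow, op_px, hst, hst.symm, if_true,
      if_false, smul_eq_mul, nsmul_eq_mul, mul_one, mul_zero, map_zero, zero_add, add_zero,
      Derivation.map_natCast]
    push_cast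
    linear_combination (X s ^ 2 + X t ^ 2 - X s * X t) * two
  rw [this]
  refine pow_ne_zero _ fun h => ?_
  have : (X s : MvPolynomial W (ZMod 2)) = X t := by linear_combination h - X t * two
  exact hst (X_injective this)

theorem op_dd2 {W : Type*} [DecidableEq W] (s t : W) (hst : s ≠ t) :
    pderiv s (pderiv t (X s ^ 1 * X t : MvPolynomial W (ZMod 2))) ≠ 0 := by
  simp [Derivation.leibniz, op_px, hst]

end DerPart
section TopPart

theorem op_lift {A : Type*} [TopologicalSpace A] [SimplyConnectedSpace A]
    [LocallyPathConnectedSpace A] (a₀ : A) (f : A → ℂ) (hf : Continuous f) (h0 : ∀ a, f a ≠ 0) :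
    ∃ g : A → ℂ, Continuous g ∧ ∀ a, Complex.exp (g a) = f a := by
  obtain ⟨F, ⟨-, hF⟩, -⟩ := Complex.isCoveringMapOn_exp.existsUnique_continuousMap_lifts
    (⟨f, hf⟩ : C(A, ℂ)) (a₀ := a₀) (e₀ := Complex.log (f a₀)) (Complex.exp_log (h0 a₀))
    (fun a => by simpa using h0 a)
  exact ⟨F, F.continuous, fun a => congrFun hF a⟩

theorem op_const (g : ℝ → ℂ) (hg : Continuous g) (c : ℂ) (h : ∀ t, Complex.exp (g t) = c) (a b : ℝ) :
    g a = g b :=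
  Complex.isCoveringMap_exp.const_of_comp hg (fun a a' => by simp [h]) a b

theorem op_diff (g₁ g₂ : ℝ → ℂ) (h₁ : Continuous g₁) (h₂ : Continuous g₂) (c : ℂ)
    (h : ∀ t, Complex.exp (g₁ t) = c * Complex.exp (g₂ t)) :
    g₁ 1 - g₁ 0 = g₂ 1 - g₂ 0 := by
  have := op_const (fun t => g₁ t - g₂ t) (h₁.sub h₂) c (fun t => by
    rw [Complex.exp_sub, h]; field_simp [Complex.exp_ne_zero]) 1 0
  linear_combination this

theorem op_top {W E : Type*} [LinearOrder W] (p : W → ℂ) (hp : Function.Injective p)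
    (src tgt : E → W) (arc : E → Set ℂ)
    (hJ : ∀ e, JoinedIn (arc e) (p (src e)) (p (tgt e)))
    (hA : ∀ e v, v ≠ src e → v ≠ tgt e → p v ∉ arc e)
    (hD : ∀ e f, src e ≠ src f → src e ≠ tgt f → tgt e ≠ src f → tgt e ≠ tgt f →
      Disjoint (arc e) (arc f)) :
    ∃ n : E → W → ZMod 2, ∀ e f, src e ≠ src f → src e ≠ tgt f → tgt e ≠ src f → tgt e ≠ tgt f →
      n e (src f) + n e (tgt f) + n f (src e) + n f (tgt e) =
        (if src e < src f then 1 else 0) + (if src e < tgt f then 1 else 0)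
          + (if tgt e < src f then 1 else 0) + (if tgt e < tgt f then 1 else 0) := by
  have hγ : ∀ e, ∃ γ : ℝ → ℂ, Continuous γ ∧ γ 0 = p (src e) ∧ γ 1 = p (tgt e) ∧
      ∀ t, γ t ∈ arc e := by
    intro e
    obtain ⟨γ, hγ⟩ := hJ e
    refine ⟨γ.extend, γ.continuous_extend, γ.extend_zero, γ.extend_one, fun t => ?_⟩
    have : γ.extend t ∈ Set.range γ := by rw [← γ.extend_range]; exact ⟨t, rfl⟩
    obtain ⟨s, hs⟩ := this
    rw [← hs]; exact hγ s
  choose γ γc γ0 γ1 γm using hγ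
  let a : W → W → ℂ := fun x v => if x < v then Complex.log (p x - p v)
    else Complex.log (p v - p x) + Real.pi * Complex.I
  have ha : ∀ x v, x ≠ v → Complex.exp (a x v) = p x - p v := by
    intro x v hxv
    have h1 : p x - p v ≠ 0 := sub_ne_zero.mpr (hp.ne hxv)
    have h2 : p v - p x ≠ 0 := sub_ne_zero.mpr (hp.ne hxv.symm)
    simp only [a]
    split_ifs
    · exact Complex.exp_log h1
    · rw [Complex.exp_add, Complex.exp_log h2, Complex.exp_pi_mul_I]; ring
  have ha2 : ∀ x v, x ≠ v → a x v - a v x =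
      Real.pi * Complex.I * (1 - 2 * (((if x < v then 1 else 0 : ℤ)) : ℂ)) := by
    intro x v hxv
    rcases lt_or_gt_of_ne hxv with h | h
    · simp [a, h, not_lt_of_gt h]; ring
    · simp [a, h, not_lt_of_gt h]
  have hL : ∀ e v, ∃ (g : ℝ → ℂ) (m : ℤ), v ≠ src e → v ≠ tgt e → Continuous g ∧
      (∀ t, Complex.exp (g t) = γ e t - p v) ∧
      g 1 - g 0 = a (tgt e) v - a (src e) v + m * (2 * Real.pi * Complex.I) := by
    intro e v
    by_cases h : v ≠ src e ∧ v ≠ tgt e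
    swap
    · exact ⟨0, 0, fun h1 h2 => absurd ⟨h1, h2⟩ h⟩
    obtain ⟨g, gc, hg⟩ := op_lift (0 : ℝ) (fun t => γ e t - p v) ((γc e).sub continuous_const)
      (fun t ht => hA e v h.1 h.2 (by rw [← sub_eq_zero.mp ht]; exact γm e t))
    have q1 : Complex.exp (g 1) = Complex.exp (a (tgt e) v) := by
      rw [hg, γ1, ha _ _ h.2.symm]
    have q0 : Complex.exp (g 0) = Complex.exp (a (src e) v) := by
      rw [hg, γ0, ha _ _ h.1.symm]
    obtain ⟨m1, hm1⟩ := Complex.exp_eq_exp_iff_exists_int.mp q1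
    obtain ⟨m0, hm0⟩ := Complex.exp_eq_exp_iff_exists_int.mp q0
    refine ⟨g, m1 - m0, fun _ _ => ⟨gc, hg, ?_⟩⟩
    rw [hm1, hm0]; push_cast; ring
  choose g m hgm using hL
  refine ⟨fun e v => (m e v : ZMod 2), ?_⟩
  intro e f h1 h2 h3 h4
  obtain ⟨Λ, Λc, hΛ⟩ := op_lift ((0, 0) : ℝ × ℝ) (fun x => γ e x.1 - γ f x.2)
    (((γc e).comp continuous_fst).sub ((γc f).comp continuous_snd))
    (fun x hx => Set.disjoint_left.mp (hD e f h1 h2 h3 h4) (γm e x.1)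
      (by rw [sub_eq_zero.mp hx]; exact γm f x.2))
  obtain ⟨c1, d1, e1⟩ := hgm e (src f) h1.symm h3.symm
  obtain ⟨c2, d2, e2⟩ := hgm e (tgt f) h2.symm h4.symm
  obtain ⟨c3, d3, e3⟩ := hgm f (src e) h1 h2
  obtain ⟨c4, d4, e4⟩ := hgm f (tgt e) h3 h4
  have k1 := op_diff (fun t => Λ (t, 0)) (g e (src f)) (by fun_prop) c1 1
    (fun t => by rw [hΛ, d1, γ0]; simp)
  have k2 := op_diff (fun t => Λ (t, 1)) (g e (tgt f)) (by fun_prop) c2 1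
    (fun t => by rw [hΛ, d2, γ1]; simp)
  have k3 := op_diff (fun t => Λ (0, t)) (g f (src e)) (by fun_prop) c3 (-1)
    (fun t => by rw [hΛ, d3, γ0]; simp)
  have k4 := op_diff (fun t => Λ (1, t)) (g f (tgt e)) (by fun_prop) c4 (-1)
    (fun t => by rw [hΛ, d4, γ1]; simp)
  have b1 := ha2 _ _ h1
  have b2 := ha2 _ _ h2
  have b3 := ha2 _ _ h3
  have b4 := ha2 _ _ h4
  generalize hx1 : (if src e < src f then (1 : ℤ) else 0) = x1 at b1
  generalize hx2 : (if src e < tgt f then (1 : ℤ) else 0) = x2 at b2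
  generalize hx3 : (if tgt e < src f then (1 : ℤ) else 0) = x3 at b3
  generalize hx4 : (if tgt e < tgt f then (1 : ℤ) else 0) = x4 at b4
  have main : (2 * Real.pi * Complex.I) * ((m e (src f) + m f (tgt e) - m e (tgt f) - m f (src e)
      + (x4 - x2 - x3 + x1) : ℤ) : ℂ) = 0 := by
    push_cast
    linear_combination (-1 : ℂ) * e1 + e2 + e3 - e4 - k1 + k2 + k3 - k4 + b4 - b2 - b3 + b1
  have main2 : (m e (src f) + m f (tgt e) - m e (tgt f) - m f (src e)
      + (x4 - x2 - x3 + x1) : ℤ) = 0 := by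
    rcases mul_eq_zero.mp main with h | h
    · exact absurd h Complex.two_pi_I_ne_zero
    · exact_mod_cast h
  have main3 := congrArg (Int.cast : ℤ → ZMod 2) main2
  have y1 : (if src e < src f then (1 : ZMod 2) else 0) = x1 := by rw [← hx1]; split_ifs <;> simp
  have y2 : (if src e < tgt f then (1 : ZMod 2) else 0) = x2 := by rw [← hx2]; split_ifs <;> simp
  have y3 : (if tgt e < src f then (1 : ZMod 2) else 0) = x3 := by rw [← hx3]; split_ifs <;> simp
  have y4 : (if tgt e < tgt f then (1 : ZMod 2) else 0) = x4 := by rw [← hx4]; split_ifs <;> simp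
  rw [y1, y2, y3, y4]
  push_cast at main3
  have two : (2 : ZMod 2) = 0 := rfl
  linear_combination main3 + ((m e (tgt f) : ZMod 2) + m f (src e) - x1 - x4) * two

end TopPart
section StressPart
open MvPolynomial

theorem op_stress {F M N E : Type*} [Field F] [AddCommGroup M] [Module F M] [AddCommGroup N]
    [Module F N] [Module.Finite F M] [Fintype E] [DecidableEq E]
    (T : M →ₗ[F] (E → F)) (Q : N →ₗ[F] M) (hQ : Function.Injective Q) (hTQ : ∀ x, T (Q x) = 0)
    (h : Module.finrank F M < Fintype.card E + Module.finrank F N) :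
    ∃ w : E → F, w ≠ 0 ∧ ∀ m, ∑ e, w e * T m e = 0 := by
  have hr := T.finrank_range_add_finrank_ker
  have hk : Module.finrank F N ≤ Module.finrank F (LinearMap.ker T) := by
    refine LinearMap.finrank_le_finrank_of_injective
      (f := Q.codRestrict (LinearMap.ker T) (fun x => hTQ x)) ?_
    intro x y hxy
    exact hQ (congrArg Subtype.val hxy)
  have hlt : LinearMap.range T < ⊤ := by
    refine lt_top_iff_ne_top.mpr fun htop => ?_
    rw [htop, finrank_top, Module.finrank_pi] at hr
    omega
  obtain ⟨φ, hφ, hφ2⟩ := Submodule.exists_dual_map_eq_bot_of_lt_top hlt inferInstance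
  have hφ3 : ∀ v, φ v = ∑ e, φ (Pi.single e 1) * v e := by
    intro v
    conv_lhs => rw [pi_eq_sum_univ' v]
    rw [map_sum]
    refine Finset.sum_congr rfl fun e _ => ?_
    rw [map_smul, smul_eq_mul, mul_comm]
  refine ⟨fun e => φ (Pi.single e 1), ?_, ?_⟩
  · intro h0
    apply hφ
    refine LinearMap.ext fun v => ?_
    have := congrFun h0
    simp only [Pi.zero_apply] at this
    rw [hφ3, LinearMap.zero_apply]
    exact Finset.sum_eq_zero fun e _ => by rw [this, zero_mul]
  · intro m
    rw [← hφ3]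
    have : φ (T m) ∈ (LinearMap.range T).map φ := ⟨T m, ⟨m, rfl⟩, rfl⟩
    rw [hφ2] at this
    simpa using this

theorem op_stress2 {W E : Type*} [Fintype W] [DecidableEq W] [Fintype E] (src tgt : E → W) (d k : ℕ)
    {F : Type*} [Field F] [Algebra (MvPolynomial W (ZMod 2)) F]
    [IsFractionRing (MvPolynomial W (ZMod 2)) F] (s : W → F)
    (hs : ∀ v, s v = algebraMap (MvPolynomial W (ZMod 2)) F (X v))
    (Q : (Fin k → F) →ₗ[F] (W → Fin d → F)) (hQ : Function.Injective Q)
    (hTQ : ∀ x e, ∑ r, (Q x (src e) r * s (tgt e) ^ (r : ℕ) + Q x (tgt e) r * s (src e) ^ (r : ℕ)) = 0)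
    (h : d * Fintype.card W < Fintype.card E + k) :
    ∃ w : E → MvPolynomial W (ZMod 2), w ≠ 0 ∧ ∀ i, ∀ r : Fin d, ∑ e, w e *
      ((if src e = i then X (tgt e) ^ (r : ℕ) else 0) + (if tgt e = i then X (src e) ^ (r : ℕ) else 0)) = 0 := by
  classical
  let T : (W → Fin d → F) →ₗ[F] (E → F) :=
    { toFun := fun c e => ∑ r, (c (src e) r * s (tgt e) ^ (r : ℕ) + c (tgt e) r * s (src e) ^ (r : ℕ))
      map_add' := by
        intro a b
        ext e
        simp only [Pi.add_apply, ← Finset.sum_add_distrib]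
        refine Finset.sum_congr rfl fun r _ => by ring
      map_smul' := by
        intro a b
        ext e
        simp only [Pi.smul_apply, smul_eq_mul, Finset.mul_sum, RingHom.id_apply]
        refine Finset.sum_congr rfl fun r _ => by ring }
  obtain ⟨w, hw, hw2⟩ := op_stress T Q hQ (fun x => funext fun e => hTQ x e) (by
    rw [Module.finrank_pi_fintype]
    simp only [Module.finrank_pi, Fintype.card_fin, Finset.sum_const, Finset.card_univ, smul_eq_mul]
    rw [mul_comm]; exact h)
  obtain ⟨⟨b, hb⟩, hb2⟩ := IsLocalization.exist_integer_multiples_of_finite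
    (nonZeroDivisors (MvPolynomial W (ZMod 2))) w
  choose w' hw' using hb2
  have hb0 : algebraMap (MvPolynomial W (ZMod 2)) F b ≠ 0 := by
    have := nonZeroDivisors.ne_zero hb
    rwa [Ne, IsFractionRing.to_map_eq_zero_iff]
  simp only [Algebra.smul_def] at hw'
  refine ⟨w', ?_, ?_⟩
  · rintro rfl
    apply hw
    ext e
    have := hw' e
    simp only [Pi.zero_apply, map_zero] at this
    exact ((mul_eq_zero.mp this.symm).resolve_left hb0)
  · intro i r
    apply IsFractionRing.injective (MvPolynomial W (ZMod 2)) F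
    have := hw2 (Pi.single i (Pi.single r 1))
    rw [map_sum, map_zero, ← mul_zero (algebraMap (MvPolynomial W (ZMod 2)) F b), ← this, Finset.mul_sum]
    refine Finset.sum_congr rfl fun e _ => ?_
    rw [map_mul, hw', mul_assoc]
    congr 2
    change _ = ∑ r' : Fin d, _
    rw [Finset.sum_eq_single r]
    · rw [map_add]
      congr 1
      · by_cases hh : src e = i
        · subst hh; simp [hs]
        · simp [hh]
      · by_cases hh : tgt e = i
        · subst hh; simp [hs]
        · simp [hh]
    · intro r' _ hr'
      have z : ∀ v, (Pi.single i (Pi.single r 1) : W → Fin d → F) v r' = 0 := by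
        intro v
        by_cases hh : v = i
        · subst hh; simp [hr']
        · simp [hh]
      simp [z]
    · simp

end StressPart
section ApplyPart
open MvPolynomial

def opS {W E R : Type*} [Fintype E] [DecidableEq W] [CommRing R] (src tgt : E → W) (g : E → R)
    (i j : W) : R :=
  ∑ e, ((if src e = i ∧ tgt e = j then g e else 0) + (if src e = j ∧ tgt e = i then g e else 0))

theorem opS_symm {W E R : Type*} [Fintype E] [DecidableEq W] [CommRing R] (src tgt : E → W)
    (g : E → R) (i j : W) : opS src tgt g i j = opS src tgt g j i := by
  unfold opS
  exact Finset.sum_congr rfl fun e _ => add_comm _ _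

theorem opS_eq {W E R : Type*} [Fintype E] [DecidableEq W] [CommRing R] (src tgt : E → W)
    (hne : ∀ e, src e ≠ tgt e)
    (hsimp : ∀ e f, (src e = src f ∧ tgt e = tgt f) ∨ (src e = tgt f ∧ tgt e = src f) → e = f)
    (g : E → R) (e : E) : opS src tgt g (src e) (tgt e) = g e := by
  unfold opS
  rw [Finset.sum_eq_single e]
  · have : ¬ (src e = tgt e ∧ tgt e = src e) := fun h => hne e h.1
    simp [this]
  · intro f _ hf
    have h1 : ¬ (src f = src e ∧ tgt f = tgt e) := fun h => hf (hsimp f e (Or.inl h))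
    have h2 : ¬ (src f = tgt e ∧ tgt f = src e) := fun h => hf (hsimp f e (Or.inr h))
    simp [h1, h2]
  · simp

theorem opS_ex {W E R : Type*} [Fintype E] [DecidableEq W] [CommRing R] (src tgt : E → W)
    (g : E → R) (i j : W) (h : opS src tgt g i j ≠ 0) :
    ∃ e, (src e = i ∧ tgt e = j) ∨ (src e = j ∧ tgt e = i) := by
  by_contra! hc
  apply h
  unfold opS
  refine Finset.sum_eq_zero fun e _ => ?_
  have h1 : ¬ (src e = i ∧ tgt e = j) := fun h => (hc e).1 h.1 h.2
  have h2 : ¬ (src e = j ∧ tgt e = i) := fun h => (hc e).2 h.1 h.2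
  simp [h1, h2]

theorem opS_sum {W E R : Type*} [Fintype W] [Fintype E] [DecidableEq W] [CommRing R] (src tgt : E → W)
    (g : E → R) (i : W) (f : W → R) :
    ∑ j, opS src tgt g i j * f j =
      ∑ e, g e * ((if src e = i then f (tgt e) else 0) + (if tgt e = i then f (src e) else 0)) := by
  unfold opS
  simp only [Finset.sum_mul]
  rw [Finset.sum_comm]
  refine Finset.sum_congr rfl fun e _ => ?_
  simp only [add_mul, Finset.sum_add_distrib, mul_add, ite_mul, zero_mul]
  congr 1
  · by_cases h : src e = i <;> simp [h]
  · by_cases h : tgt e = i <;> simp [h]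

theorem op_pd {W : Type*} (a : W) (w q : MvPolynomial W (ZMod 2)) :
    pderiv a (w ^ 2 * q) = w ^ 2 * pderiv a q := by
  have two : (2 : MvPolynomial W (ZMod 2)) = 0 := CharTwo.two_eq_zero
  rw [Derivation.leibniz, Derivation.leibniz_pow]
  simp only [smul_eq_mul, nsmul_eq_mul]
  push_cast
  rw [two]; ring

theorem op_apply {W E : Type*} [Fintype W] [LinearOrder W] [Fintype E] (src tgt : E → W)
    (hne : ∀ e, src e ≠ tgt e)
    (hsimp : ∀ e f, (src e = src f ∧ tgt e = tgt f) ∨ (src e = tgt f ∧ tgt e = src f) → e = f)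
    (n : E → W → ZMod 2)
    (hn : ∀ e f, src e ≠ src f → src e ≠ tgt f → tgt e ≠ src f → tgt e ≠ tgt f →
      n e (src f) + n e (tgt f) + n f (src e) + n f (tgt e) =
      (if src e < src f then 1 else 0) + (if src e < tgt f then 1 else 0) +
      (if tgt e < src f then 1 else 0) + (if tgt e < tgt f then 1 else 0))
    (d : ℕ) (w : E → MvPolynomial W (ZMod 2))
    (hw : ∀ i, ∀ r : Fin d, ∑ e, w e *
      ((if src e = i then X (tgt e) ^ (r : ℕ) else 0) + (if tgt e = i then X (src e) ^ (r : ℕ) else 0)) = 0)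
    (hd : 0 < d)
    (P : W → W → W → W → MvPolynomial W (ZMod 2))
    (Ps1 : ∀ i j k l, P i j k l = P j i k l) (Ps2 : ∀ i j k l, P i j k l = P i j l k)
    (P1 : ∀ i k l, ∃ c : Fin d → MvPolynomial W (ZMod 2), ∀ e,
      (src e = i → P i (tgt e) k l = ∑ r, c r * X (tgt e) ^ (r : ℕ)) ∧
      (tgt e = i → P i (src e) k l = ∑ r, c r * X (src e) ^ (r : ℕ)))
    (P2 : ∀ i j k, ∃ c : Fin d → MvPolynomial W (ZMod 2), ∀ e,
      (src e = k → P i j k (tgt e) = ∑ r, c r * X (tgt e) ^ (r : ℕ)) ∧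
      (tgt e = k → P i j k (src e) = ∑ r, c r * X (src e) ^ (r : ℕ)))
    (Pd : ∀ e, P (src e) (tgt e) (src e) (tgt e) = 0)
    (psi : W → W → MvPolynomial W (ZMod 2))
    (Psh : ∀ i j l, (∃ e, (src e = i ∧ tgt e = j) ∨ (src e = j ∧ tgt e = i)) →
      (∃ e, (src e = i ∧ tgt e = l) ∨ (src e = l ∧ tgt e = i)) → P i j i l = psi i j + psi i l)
    (hq : ∀ e, ∃ a b, pderiv a (pderiv b (psi (src e) (tgt e) + psi (tgt e) (src e))) ≠ 0 ∧
      ∀ f, f ≠ e → pderiv a (pderiv b (psi (src f) (tgt f) + psi (tgt f) (src f))) = 0) :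
    w = 0 := by
  have key : ∀ (i : W) (f : W → MvPolynomial W (ZMod 2)) (c : Fin d → MvPolynomial W (ZMod 2)),
      (∀ e, (src e = i → f (tgt e) = ∑ r, c r * X (tgt e) ^ (r : ℕ)) ∧
      (tgt e = i → f (src e) = ∑ r, c r * X (src e) ^ (r : ℕ))) →
      ∑ j, opS src tgt w i j * f j = 0 := by
    intro i f c hc
    rw [opS_sum]
    have : ∀ e, w e * ((if src e = i then f (tgt e) else 0) + (if tgt e = i then f (src e) else 0)) =
      ∑ r : Fin d, c r * (w e * ((if src e = i then X (tgt e) ^ (r : ℕ) else 0) +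
        (if tgt e = i then X (src e) ^ (r : ℕ) else 0))) := by
      intro e
      have t1 : (if src e = i then f (tgt e) else 0) =
          ∑ r : Fin d, c r * (if src e = i then X (tgt e) ^ (r : ℕ) else 0) := by
        split_ifs with h
        · exact (hc e).1 h
        · simp
      have t2 : (if tgt e = i then f (src e) else 0) =
          ∑ r : Fin d, c r * (if tgt e = i then X (src e) ^ (r : ℕ) else 0) := by
        split_ifs with h
        · exact (hc e).2 h
        · simp
      rw [t1, t2, ← Finset.sum_add_distrib, Finset.mul_sum]
      exact Finset.sum_congr rfl fun r _ => by ring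
    simp only [this]
    rw [Finset.sum_comm]
    refine Finset.sum_eq_zero fun r _ => ?_
    rw [← Finset.mul_sum, hw, mul_zero]
  have hsw : ∀ (g : E → MvPolynomial W (ZMod 2)) (e : E), opS src tgt g (tgt e) (src e) = g e :=
    fun g e => by rw [opS_symm]; exact opS_eq src tgt hne hsimp g e
  have hnn : ∀ e f, src e ≠ src f → src e ≠ tgt f → tgt e ≠ src f → tgt e ≠ tgt f →
      (C (n e (src f)) + C (n e (tgt f)) + C (n f (src e)) + C (n f (tgt e)) : MvPolynomial W (ZMod 2)) =
      (if src e < src f then 1 else 0) + (if src e < tgt f then 1 else 0) +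
      (if tgt e < src f then 1 else 0) + (if tgt e < tgt f then 1 else 0) := by
    intro e f h1 h2 h3 h4
    have := congrArg (C : ZMod 2 → MvPolynomial W (ZMod 2)) (hn e f h1 h2 h3 h4)
    simpa only [map_add, apply_ite (C : ZMod 2 → MvPolynomial W (ZMod 2)), map_one, map_zero] using this
  have main := op_core (opS src tgt w) (opS_symm src tgt w)
    (by
      intro i
      by_contra h
      obtain ⟨e, h | h⟩ := opS_ex src tgt w i i h
      · exact hne e (h.1.trans h.2.symm)
      · exact hne e (h.1.trans h.2.symm))
    (fun i j v => opS src tgt (fun e => (C (n e v) : MvPolynomial W (ZMod 2))) i j)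
    (fun i j v => opS_symm src tgt _ i j)
    (by
      intro i j k l hij hkl h1 h2 h3 h4
      obtain ⟨e, he⟩ := opS_ex src tgt w i j hij
      obtain ⟨f, hf⟩ := opS_ex src tgt w k l hkl
      rcases he with ⟨rfl, rfl⟩ | ⟨rfl, rfl⟩ <;> rcases hf with ⟨rfl, rfl⟩ | ⟨rfl, rfl⟩ <;>
        simp only [hsw, opS_eq src tgt hne hsimp]
      · exact hnn e f h1 h2 h3 h4
      · linear_combination hnn e f h2 h1 h4 h3
      · linear_combination hnn e f h3 h4 h1 h2
      · linear_combination hnn e f h4 h3 h2 h1)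
    P Ps1 Ps2
    (by
      intro i k l
      obtain ⟨c, hc⟩ := P1 i k l
      exact key i (fun j => P i j k l) c hc)
    (by
      intro i j k
      obtain ⟨c, hc⟩ := P2 i j k
      exact key k (fun l => P i j k l) c hc)
    (by
      intro i j h
      obtain ⟨e, ⟨rfl, rfl⟩ | ⟨rfl, rfl⟩⟩ := opS_ex src tgt w i j h
      · exact Pd e
      · rw [Ps1, Ps2]; exact Pd e)
    psi
    (fun i j l h1 h2 => Psh i j l (opS_ex src tgt w i j h1) (opS_ex src tgt w i l h2))
    (by
      intro i
      have := key i (fun _ => 1) (fun r => if (r : ℕ) = 0 then 1 else 0) (by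
        have : ∀ x : MvPolynomial W (ZMod 2),
            1 = ∑ r : Fin d, (if (r : ℕ) = 0 then 1 else 0) * x ^ (r : ℕ) := by
          intro x
          rw [Finset.sum_eq_single ⟨0, hd⟩]
          · simp
          · intro b _ hb
            have : (b : ℕ) ≠ 0 := fun h => hb (Fin.ext h)
            simp [this]
          · simp
        intro e
        exact ⟨fun _ => this _, fun _ => this _⟩)
      simpa using this)
  have hsq : ∀ i j, opS src tgt w i j ^ 2 = opS src tgt (fun e => w e ^ 2) i j := by
    intro i j
    by_cases h : ∃ e, (src e = i ∧ tgt e = j) ∨ (src e = j ∧ tgt e = i)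
    · obtain ⟨e, ⟨rfl, rfl⟩ | ⟨rfl, rfl⟩⟩ := h
      · simp only [opS_eq src tgt hne hsimp]
      · simp only [hsw]
    · have h1 : opS src tgt w i j = 0 := by
        by_contra hc; exact h (opS_ex _ _ _ _ _ hc)
      have h2 : opS src tgt (fun e => w e ^ 2) i j = 0 := by
        by_contra hc; exact h (opS_ex _ _ _ _ _ hc)
      rw [h1, h2]; simp
  simp only [hsq, opS_sum] at main
  rw [Finset.sum_comm] at main
  have main2 : ∑ e, w e ^ 2 * (psi (src e) (tgt e) + psi (tgt e) (src e)) = 0 := by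
    refine Eq.trans ?_ main
    refine Finset.sum_congr rfl fun e _ => ?_
    rw [← Finset.mul_sum, Finset.sum_add_distrib]
    simp
  funext e
  obtain ⟨a, b, h1, h2⟩ := hq e
  have main3 := congrArg (fun p => pderiv a (pderiv b p)) main2
  simp only [map_sum, op_pd, map_zero] at main3
  rw [Finset.sum_eq_single e (fun f _ hf => by rw [h2 f hf, mul_zero]) (by simp)] at main3
  have := (mul_eq_zero.mp main3).resolve_right h1
  exact pow_eq_zero_iff (two_ne_zero) |>.mp this

end ApplyPart
section BoundPart
open MvPolynomial

theorem op_quad {F : Type*} [Field F] (a b c x y z : F) (hab : a ≠ b) (hac : a ≠ c) (hbc : b ≠ c)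
    (h1 : x + y * a + z * a ^ 2 = 0) (h2 : x + y * b + z * b ^ 2 = 0)
    (h3 : x + y * c + z * c ^ 2 = 0) : x = 0 ∧ y = 0 ∧ z = 0 := by
  have e1 : y + z * (a + b) = 0 := by
    have : (a - b) * (y + z * (a + b)) = 0 := by linear_combination h1 - h2
    exact (mul_eq_zero.mp this).resolve_left (sub_ne_zero.mpr hab)
  have e2 : y + z * (a + c) = 0 := by
    have : (a - c) * (y + z * (a + c)) = 0 := by linear_combination h1 - h3
    exact (mul_eq_zero.mp this).resolve_left (sub_ne_zero.mpr hac)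
  have e3 : z = 0 := by
    have : (b - c) * z = 0 := by linear_combination e1 - e2
    exact (mul_eq_zero.mp this).resolve_left (sub_ne_zero.mpr hbc)
  subst e3
  have e4 : y = 0 := by simpa using e1
  subst e4
  exact ⟨by simpa using h1, rfl, rfl⟩

theorem op_gen {W E : Type*} [Fintype W] [LinearOrder W] [Fintype E] (src tgt : E → W)
    (hne : ∀ e, src e ≠ tgt e)
    (hsimp : ∀ e f, (src e = src f ∧ tgt e = tgt f) ∨ (src e = tgt f ∧ tgt e = src f) → e = f)
    (n : E → W → ZMod 2)
    (hn : ∀ e f, src e ≠ src f → src e ≠ tgt f → tgt e ≠ src f → tgt e ≠ tgt f →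
      n e (src f) + n e (tgt f) + n f (src e) + n f (tgt e) =
      (if src e < src f then 1 else 0) + (if src e < tgt f then 1 else 0) +
      (if tgt e < src f then 1 else 0) + (if tgt e < tgt f then 1 else 0))
    (hW : 3 ≤ Fintype.card W) : Fintype.card E + 6 ≤ 3 * Fintype.card W := by
  by_contra! hlt
  let F := FractionRing (MvPolynomial W (ZMod 2))
  let s : W → F := fun v => algebraMap (MvPolynomial W (ZMod 2)) F (X v)
  have sinj : Function.Injective s := fun a b h =>
    X_injective (IsFractionRing.injective (MvPolynomial W (ZMod 2)) F h)
  have two : (2 : MvPolynomial W (ZMod 2)) = 0 := CharTwo.two_eq_zero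
  have twoF : (2 : F) = 0 := by
    have := congrArg (algebraMap (MvPolynomial W (ZMod 2)) F) two
    rwa [map_ofNat, map_zero] at this
  let Q : (Fin 6 → F) →ₗ[F] (W → Fin 3 → F) :=
    { toFun := fun x v => ![x 0 + x 1 * s v + x 2 * s v ^ 2, x 1 + x 3 * s v + x 4 * s v ^ 2,
        x 2 + x 4 * s v + x 5 * s v ^ 2]
      map_add' := by
        intro x y
        ext v r
        fin_cases r <;> simp <;> ring
      map_smul' := by
        intro x y
        ext v r
        fin_cases r <;> simp <;> ring }
  obtain ⟨a, b, c, hab, hac, hbc⟩ := Fintype.two_lt_card_iff.mp hW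
  have hQ : Function.Injective Q := by
    rw [injective_iff_map_eq_zero]
    intro x hx
    have h : ∀ r, ∀ v, Q x v r = 0 := fun r v => by rw [hx]; rfl
    have q0 := h 0
    have q1 := h 1
    have q2 := h 2
    simp only [Q, LinearMap.coe_mk, AddHom.coe_mk] at q0 q1 q2
    obtain ⟨z0, z1, z2⟩ := op_quad (s a) (s b) (s c) _ _ _ (sinj.ne hab) (sinj.ne hac) (sinj.ne hbc)
      (q0 a) (q0 b) (q0 c)
    obtain ⟨z1, z3, z4⟩ := op_quad (s a) (s b) (s c) _ _ _ (sinj.ne hab) (sinj.ne hac) (sinj.ne hbc)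
      (q1 a) (q1 b) (q1 c)
    obtain ⟨z2, z4, z5⟩ := op_quad (s a) (s b) (s c) _ _ _ (sinj.ne hab) (sinj.ne hac) (sinj.ne hbc)
      (q2 a) (q2 b) (q2 c)
    ext i
    fin_cases i
    · exact z0
    · exact z1
    · exact z2
    · exact z3
    · exact z4
    · exact z5
  obtain ⟨w, hw0, hw⟩ := op_stress2 src tgt 3 6 s (fun _ => rfl) Q hQ (by
    intro x e
    simp only [Q, LinearMap.coe_mk, AddHom.coe_mk, Fin.sum_univ_three]
    simp
    generalize s (src e) = p
    generalize s (tgt e) = q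
    linear_combination (x 0 + x 1 * p + x 1 * q + x 2 * p ^ 2 + x 2 * q ^ 2 + x 3 * p * q
      + x 4 * p * q ^ 2 + x 4 * p ^ 2 * q + x 5 * p ^ 2 * q ^ 2) * twoF) hlt
  apply hw0
  refine op_apply src tgt hne hsimp n hn 3 w hw (by norm_num)
    (fun i j k l => (X i * X j) ^ 2 + (X i + X j) ^ 2 * (X k * X l)
      + (X i + X j) * (X i * X j) * (X k + X l) + (X i * X j) * (X k * X l))
    (fun i j k l => by ring) (fun i j k l => by ring) ?_ ?_ ?_ (fun i j => X i ^ 3 * X j) ?_ ?_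
  · intro i k l
    have : ∀ j : W, ((X i * X j) ^ 2 + (X i + X j) ^ 2 * (X k * X l)
      + (X i + X j) * (X i * X j) * (X k + X l) + (X i * X j) * (X k * X l) : MvPolynomial W (ZMod 2)) =
      ∑ r : Fin 3, (![X i ^ 2 * (X k * X l), X i ^ 2 * (X k + X l) + X i * (X k * X l),
        X i ^ 2 + X k * X l + X i * (X k + X l)] : Fin 3 → MvPolynomial W (ZMod 2)) r * X j ^ (r : ℕ) := by
      intro j
      simp only [Fin.sum_univ_three]
      simp
      linear_combination (X i * X j * X k * X l) * two
    exact ⟨_, fun e => ⟨fun _ => this _, fun _ => this _⟩⟩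
  · intro i j k
    have : ∀ l : W, ((X i * X j) ^ 2 + (X i + X j) ^ 2 * (X k * X l)
      + (X i + X j) * (X i * X j) * (X k + X l) + (X i * X j) * (X k * X l) : MvPolynomial W (ZMod 2)) =
      ∑ r : Fin 3, (![(X i * X j) ^ 2 + (X i + X j) * (X i * X j) * X k,
        (X i + X j) ^ 2 * X k + (X i + X j) * (X i * X j) + (X i * X j) * X k,
        0] : Fin 3 → MvPolynomial W (ZMod 2)) r * X l ^ (r : ℕ) := by
      intro l
      simp only [Fin.sum_univ_three]
      simp
      ring
    exact ⟨_, fun e => ⟨fun _ => this _, fun _ => this _⟩⟩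
  · intro e
    generalize (X (src e) : MvPolynomial W (ZMod 2)) = p
    generalize (X (tgt e) : MvPolynomial W (ZMod 2)) = q
    linear_combination (p ^ 2 * q ^ 2 * 3 + p ^ 3 * q + q ^ 3 * p) * two
  · intro i j l _ _
    generalize (X i : MvPolynomial W (ZMod 2)) = p
    generalize (X j : MvPolynomial W (ZMod 2)) = q
    generalize (X l : MvPolynomial W (ZMod 2)) = r
    linear_combination (p ^ 2 * q ^ 2 + 2 * p ^ 2 * q * r + p * q ^ 2 * r) * two
  · intro e
    refine ⟨src e, tgt e, op_dd1 _ _ (hne e), ?_⟩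
    intro f hfe
    have h1 : ¬ (src f = src e ∧ tgt f = tgt e) := fun h => hfe (hsimp f e (Or.inl h))
    have h2 : ¬ (src f = tgt e ∧ tgt f = src e) := fun h => hfe (hsimp f e (Or.inr h))
    rw [map_add, map_add, op_dd0 _ _ _ _ _ (hne e) h1 h2 (hne f),
      op_dd0 _ _ _ _ _ (hne e) (fun h => h2 ⟨h.2, h.1⟩) (fun h => h1 ⟨h.2, h.1⟩) (hne f).symm, add_zero]

theorem op_bip {W E : Type*} [Fintype W] [LinearOrder W] [Fintype E] (src tgt : E → W)
    (A : W → Prop) [DecidablePred A] (hA1 : ∀ e, A (src e)) (hA2 : ∀ e, ¬ A (tgt e))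
    (hsimp : ∀ e f, src e = src f → tgt e = tgt f → e = f)
    (n : E → W → ZMod 2)
    (hn : ∀ e f, src e ≠ src f → src e ≠ tgt f → tgt e ≠ src f → tgt e ≠ tgt f →
      n e (src f) + n e (tgt f) + n f (src e) + n f (tgt e) =
      (if src e < src f then 1 else 0) + (if src e < tgt f then 1 else 0) +
      (if tgt e < src f then 1 else 0) + (if tgt e < tgt f then 1 else 0))
    (a b : W) (hab : a ≠ b) (ha : A a) (hb : A b) : Fintype.card E + 4 ≤ 2 * Fintype.card W := by
  by_contra! hlt
  have hx : ∀ e f, src e ≠ tgt f := fun e f h => hA2 f (h ▸ hA1 e)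
  have hne : ∀ e, src e ≠ tgt e := fun e => hx e e
  let F := FractionRing (MvPolynomial W (ZMod 2))
  let s : W → F := fun v => algebraMap (MvPolynomial W (ZMod 2)) F (X v)
  have sinj : Function.Injective s := fun a b h =>
    X_injective (IsFractionRing.injective (MvPolynomial W (ZMod 2)) F h)
  have two : (2 : MvPolynomial W (ZMod 2)) = 0 := CharTwo.two_eq_zero
  have twoF : (2 : F) = 0 := by
    have := congrArg (algebraMap (MvPolynomial W (ZMod 2)) F) two
    rwa [map_ofNat, map_zero] at this
  let Q : (Fin 4 → F) →ₗ[F] (W → Fin 2 → F) :=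
    { toFun := fun x v => if A v then ![x 0 + x 1 * s v, x 2 + x 3 * s v]
        else ![x 0 + x 2 * s v, x 1 + x 3 * s v]
      map_add' := by
        intro x y
        ext v r
        by_cases h : A v <;> fin_cases r <;> simp [h] <;> ring
      map_smul' := by
        intro x y
        ext v r
        by_cases h : A v <;> fin_cases r <;> simp [h] <;> ring }
  have lin : ∀ x y : F, x + y * s a = 0 → x + y * s b = 0 → x = 0 ∧ y = 0 := by
    intro x y h1 h2
    have : (s a - s b) * y = 0 := by linear_combination h1 - h2
    have hy := (mul_eq_zero.mp this).resolve_left (sub_ne_zero.mpr (sinj.ne hab))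
    subst hy
    exact ⟨by simpa using h1, rfl⟩
  have hQ : Function.Injective Q := by
    rw [injective_iff_map_eq_zero]
    intro x hx
    have h : ∀ r, ∀ v, Q x v r = 0 := fun r v => by rw [hx]; rfl
    have q0 := h 0 a
    have q1 := h 1 a
    have q2 := h 0 b
    have q3 := h 1 b
    simp only [Q, LinearMap.coe_mk, AddHom.coe_mk, ha, hb, if_true] at q0 q1 q2 q3
    obtain ⟨z0, z1⟩ := lin _ _ q0 q2
    obtain ⟨z2, z3⟩ := lin _ _ q1 q3
    ext i
    fin_cases i
    · exact z0
    · exact z1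
    · exact z2
    · exact z3
  obtain ⟨w, hw0, hw⟩ := op_stress2 src tgt 2 4 s (fun _ => rfl) Q hQ (by
    intro x e
    simp only [Q, LinearMap.coe_mk, AddHom.coe_mk, Fin.sum_univ_two, hA1, hA2, if_true, if_false]
    simp
    generalize s (src e) = p
    generalize s (tgt e) = q
    linear_combination (x 0 + x 1 * p + x 2 * q + x 3 * p * q) * twoF) hlt
  apply hw0
  let al : W → MvPolynomial W (ZMod 2) := fun v => if A v then X v else 0
  let be : W → MvPolynomial W (ZMod 2) := fun v => if A v then 0 else X v
  have al1 : ∀ e, al (src e) = X (src e) := fun e => if_pos (hA1 e)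
  have al2 : ∀ e, al (tgt e) = 0 := fun e => if_neg (hA2 e)
  have be1 : ∀ e, be (src e) = 0 := fun e => if_pos (hA1 e)
  have be2 : ∀ e, be (tgt e) = X (tgt e) := fun e => if_neg (hA2 e)
  have hsimp2 : ∀ e f, (src e = src f ∧ tgt e = tgt f) ∨ (src e = tgt f ∧ tgt e = src f) → e = f := by
    rintro e f (h | h)
    · exact hsimp e f h.1 h.2
    · exact absurd h.1 (hx e f)
  refine op_apply src tgt hne hsimp2 n hn 2 w hw (by norm_num)
    (fun i j k l => (al i + al j) * (be i + be j + be k + be l))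
    (fun i j k l => by ring) (fun i j k l => by ring) ?_ ?_ ?_ (fun i j => al i * be j) ?_ ?_
  · intro i k l
    by_cases hi : A i
    · have hb : be i = 0 := if_pos hi
      refine ⟨![al i * (be k + be l), al i], fun e => ⟨fun _ => ?_, fun h => absurd (h ▸ hi) (hA2 e)⟩⟩
      simp only [Fin.sum_univ_two, al2, be2, hb]
      simp
      ring
    · have hb : al i = 0 := if_neg hi
      refine ⟨![0, be i + be k + be l], fun e => ⟨fun h => absurd (hA1 e) (h ▸ hi), fun h => ?_⟩⟩
      simp only [Fin.sum_univ_two, al1, be1, hb]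
      simp
      ring
  · intro i j k
    by_cases hi : A k
    · refine ⟨![(al i + al j) * (be i + be j + be k), al i + al j],
        fun e => ⟨fun _ => ?_, fun h => absurd (h ▸ hi) (hA2 e)⟩⟩
      simp only [Fin.sum_univ_two, be2]
      simp
      ring
    · refine ⟨![(al i + al j) * (be i + be j + be k), 0],
        fun e => ⟨fun h => absurd (hA1 e) (h ▸ hi), fun h => ?_⟩⟩
      simp only [Fin.sum_univ_two, be1]
      simp
  · intro e
    simp only [al1, al2, be1, be2]
    linear_combination X (src e) * X (tgt e) * two
  · rintro i j l ⟨e, he⟩ ⟨f, hf⟩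
    rcases he with ⟨rfl, rfl⟩ | ⟨rfl, rfl⟩
    · rcases hf with ⟨h1, rfl⟩ | ⟨rfl, h1⟩
      · simp only [al1, al2, be1, be2]
        ring
      · exact absurd h1.symm (hx e f)
    · rcases hf with ⟨h1, rfl⟩ | ⟨rfl, h1⟩
      · exact absurd h1 (hx f e)
      · simp only [al1, al2, be1, be2]
        linear_combination X (src e) * X (tgt e) * two
  · intro e
    refine ⟨src e, tgt e, ?_, ?_⟩
    · have := op_dd2 _ _ (hne e)
      simpa only [al1, al2, be1, be2, zero_mul, add_zero, pow_one] using this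
    · intro f hfe
      have h1 : ¬ (src f = src e ∧ tgt f = tgt e) := fun h => hfe (hsimp f e h.1 h.2)
      have h2 : ¬ (src f = tgt e ∧ tgt f = src e) := fun h => hx f e h.1
      have := op_dd0 _ _ _ _ 1 (hne e) h1 h2 (hne f)
      simpa only [al1, al2, be1, be2, zero_mul, add_zero, pow_one] using this

end BoundPart
section PlanePart

theorem op_topR {W E : Type*} [LinearOrder W] (p : W → ℝ × ℝ) (hp : Function.Injective p)
    (src tgt : E → W) (arc : E → Set (ℝ × ℝ))
    (hJ : ∀ e, JoinedIn (arc e) (p (src e)) (p (tgt e)))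
    (hA : ∀ e v, v ≠ src e → v ≠ tgt e → p v ∉ arc e)
    (hD : ∀ e f, src e ≠ src f → src e ≠ tgt f → tgt e ≠ src f → tgt e ≠ tgt f →
      Disjoint (arc e) (arc f)) :
    ∃ n : E → W → ZMod 2, ∀ e f, src e ≠ src f → src e ≠ tgt f → tgt e ≠ src f → tgt e ≠ tgt f →
      n e (src f) + n e (tgt f) + n f (src e) + n f (tgt e) =
      (if src e < src f then 1 else 0) + (if src e < tgt f then 1 else 0) +
      (if tgt e < src f then 1 else 0) + (if tgt e < tgt f then 1 else 0) := by
  let φ := Complex.equivRealProdCLM.symm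
  have hφ : Function.Injective φ := φ.injective
  refine op_top (fun v => φ (p v)) (hφ.comp hp) src tgt (fun e => φ '' arc e) ?_ ?_ ?_
  · intro e
    exact (hJ e).map_continuousOn φ.continuous.continuousOn
  · intro e v h1 h2 h
    exact hA e v h1 h2 ((Function.Injective.mem_set_image hφ).mp h)
  · intro e f h1 h2 h3 h4
    exact (Set.disjoint_image_iff hφ).mpr (hD e f h1 h2 h3 h4)

variable {V : Type*} {G : SimpleGraph V} (D : SimpleDrawing G)

theorem op_joined (c : ℝ → ℝ × ℝ) (hc : ContinuousOn c (Set.Icc 0 1)) (s t : ℝ)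
    (hs : s ∈ Set.Icc (0 : ℝ) 1) (ht : t ∈ Set.Icc (0 : ℝ) 1) (hst : s ≤ t) :
    JoinedIn (c '' Set.Icc s t) (c s) (c t) := by
  have hsub : Set.Icc s t ⊆ Set.Icc (0 : ℝ) 1 := Set.Icc_subset_Icc hs.1 ht.2
  have : IsPathConnected (Set.Icc s t) := (convex_Icc s t).isPathConnected ⟨s, le_rfl, hst⟩
  have := this.image' (hc.mono hsub)
  exact this.joinedIn _ ⟨s, ⟨le_rfl, hst⟩, rfl⟩ _ ⟨t, ⟨hst, le_rfl⟩, rfl⟩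

theorem op_ends (e : G.edgeSet) : ∃ uv : V × V, (e : Sym2 V) = s(uv.1, uv.2) ∧
    D.curve e 0 = D.pos uv.1 ∧ D.curve e 1 = D.pos uv.2 := by
  obtain ⟨⟨u, v⟩, h⟩ := Sym2.mk_surjective (e : Sym2 V)
  rcases D.curve_ends e u v h.symm with k | k
  · exact ⟨(u, v), h.symm, k⟩
  · exact ⟨(v, u), h.symm.trans Sym2.eq_swap, k⟩

theorem op_vtx (e : G.edgeSet) (u v w : V) (hu : D.curve e 0 = D.pos u) (hv : D.curve e 1 = D.pos v)
    (h : D.pos w ∈ D.curve e '' Set.Icc 0 1) : w = u ∨ w = v := by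
  obtain ⟨t, ht, h⟩ := h
  rcases eq_or_lt_of_le ht.1 with h0 | h0
  · subst h0
    exact Or.inl (D.pos_inj (h.symm.trans hu))
  · rcases eq_or_lt_of_le ht.2 with h1 | h1
    · subst h1
      exact Or.inr (D.pos_inj (h.symm.trans hv))
    · exact absurd ⟨w, h.symm⟩ (D.curve_avoid e t ⟨h0, h1⟩)

theorem op_mem (e : G.edgeSet) (q : ℝ × ℝ) (h : q ∈ D.curve e '' Set.Icc 0 1) :
    q ∈ D.interiorArc e ∨ ∃ v, q = D.pos v := by
  obtain ⟨uv, -, hu, hv⟩ := op_ends D e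
  obtain ⟨t, ht, h⟩ := h
  rcases eq_or_lt_of_le ht.1 with h0 | h0
  · subst h0
    exact Or.inr ⟨_, h.symm.trans hu⟩
  · rcases eq_or_lt_of_le ht.2 with h1 | h1
    · subst h1
      exact Or.inr ⟨_, h.symm.trans hv⟩
    · exact Or.inl ⟨t, ⟨h0, h1⟩, h⟩

theorem op_common (e f : G.edgeSet) (hef : e ≠ f) (hc : ¬ D.Crosses e f) (q : ℝ × ℝ)
    (h1 : q ∈ D.curve e '' Set.Icc 0 1) (h2 : q ∈ D.curve f '' Set.Icc 0 1) :
    ∃ v, q = D.pos v := by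
  rcases op_mem D e q h1 with h | h
  · rcases op_mem D f q h2 with h' | h'
    · exact absurd ⟨hef, q, h, h'⟩ hc
    · exact h'
  · exact h

theorem op_int_sub (e : G.edgeSet) : D.interiorArc e ⊆ D.curve e '' Set.Icc 0 1 :=
  Set.image_mono Set.Ioo_subset_Icc_self

theorem op_int_avoid (e : G.edgeSet) (v : V) : D.pos v ∉ D.interiorArc e := by
  rintro ⟨t, ht, h⟩
  exact D.curve_avoid e t ht ⟨v, h.symm⟩

theorem op_cross_symm {e f : G.edgeSet} (h : D.Crosses e f) : D.Crosses f e :=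
  ⟨h.1.symm, by rw [Set.inter_comm]; exact h.2⟩

theorem op_cross_vtx {e f : G.edgeSet} (h : D.Crosses e f) (v : V)
    (h1 : D.pos v ∈ D.curve e '' Set.Icc 0 1) (h2 : D.pos v ∈ D.curve f '' Set.Icc 0 1) : False := by
  obtain ⟨hef, q, q1, q2⟩ := h
  have := D.simple e f hef ⟨h1, h2⟩ ⟨op_int_sub D e q1, op_int_sub D f q2⟩
  exact op_int_avoid D e v (this ▸ q1)

theorem op_final [Fintype V] [Fintype G.edgeSet] (hn : 3 ≤ Fintype.card V) (h1p : D.IsOnePlane) :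
    Fintype.card G.edgeSet + 8 ≤ 4 * Fintype.card V := by
  classical
  choose uv huv hu hv using op_ends D
  have vtx : ∀ e w, D.pos w ∈ D.curve e '' Set.Icc 0 1 → w = (uv e).1 ∨ w = (uv e).2 :=
    fun e w h => op_vtx D e _ _ w (hu e) (hv e) h
  have huvne : ∀ e, (uv e).1 ≠ (uv e).2 := by
    intro e h
    have := D.curve_inj e (show (0 : ℝ) ∈ Set.Icc (0 : ℝ) 1 by simp)
      (show (1 : ℝ) ∈ Set.Icc (0 : ℝ) 1 by simp) (by rw [hu, hv, h])
    exact zero_ne_one this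
  let o := Fintype.equivFin G.edgeSet
  let R : G.edgeSet → Prop := fun e => ∃ f, D.Crosses e f ∧ o e < o f
  letI : LinearOrder V := LinearOrder.lift' (Fintype.equivFin V) (Fintype.equivFin V).injective
  -- first bound
  have B1 : Fintype.card {e // ¬ R e} + 6 ≤ 3 * Fintype.card V := by
    obtain ⟨n, hnn⟩ := op_topR D.pos D.pos_inj (fun e : {e // ¬ R e} => (uv e.1).1)
      (fun e => (uv e.1).2) (fun e => D.curve e.1 '' Set.Icc 0 1)
      (by
        intro e
        have := op_joined (D.curve e.1) (D.curve_cont e.1) 0 1 (by simp) (by simp) zero_le_one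
        rwa [hu, hv] at this)
      (by
        intro e v h1 h2 h
        rcases vtx _ _ h with h | h
        · exact h1 h
        · exact h2 h)
      (by
        intro e f h1 h2 h3 h4
        rw [Set.disjoint_left]
        intro q q1 q2
        have hef : e.1 ≠ f.1 := fun h => h1 (by rw [h])
        have hc : ¬ D.Crosses e.1 f.1 := by
          intro hc
          rcases lt_trichotomy (o e.1) (o f.1) with h | h | h
          · exact e.2 ⟨f.1, hc, h⟩
          · exact hef (o.injective h)
          · exact f.2 ⟨e.1, op_cross_symm D hc, h⟩
        obtain ⟨v, rfl⟩ := op_common D _ _ hef hc q q1 q2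
        rcases vtx _ _ q1 with h | h <;> rcases vtx _ _ q2 with h' | h'
        · exact h1 (h.symm.trans h')
        · exact h2 (h.symm.trans h')
        · exact h3 (h.symm.trans h')
        · exact h4 (h.symm.trans h'))
    refine op_gen _ _ (fun e => huvne e.1) ?_ n hnn hn
    rintro e f (⟨h1, h2⟩ | ⟨h1, h2⟩)
    · apply Subtype.ext; apply Subtype.ext
      rw [huv e.1, huv f.1, h1, h2]
    · apply Subtype.ext; apply Subtype.ext
      rw [huv e.1, huv f.1, h1, h2]; exact Sym2.eq_swap
  -- crossing structure
  have B2 : 4 * Fintype.card {e // R e} + 4 ≤ 2 * (Fintype.card V + Fintype.card {e // R e}) := by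
    have hR : ∀ x : {e // R e}, ∃ f, D.Crosses x.1 f ∧ o x.1 < o f := fun x => x.2
    choose pi hpi hpo using hR
    have hz : ∀ x, (D.interiorArc x.1 ∩ D.interiorArc (pi x)).Nonempty := fun x => (hpi x).2
    choose z hz1 hz2 using hz
    let g : {e // R e} → Bool → G.edgeSet := fun x b => if b then x.1 else pi x
    let en : G.edgeSet → Bool → V := fun e b => if b then (uv e).1 else (uv e).2
    have gc : ∀ x b, D.Crosses (g x b) (g x (!b)) := by
      intro x b
      cases b
      · exact op_cross_symm D (hpi x)
      · exact hpi x
    have gz : ∀ x b, z x ∈ D.interiorArc (g x b) := by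
      intro x b
      cases b
      · exact hz2 x
      · exact hz1 x
    have G1 : ∀ x y b b', g x b = g y b' → x = y := by
      intro x y b b' h
      have h' : g x (!b) = g y (!b') := h1p (g x b) (gc x b) (by
        have := gc y b'
        rwa [← h] at this)
      cases b <;> cases b'
      · exact Subtype.ext h'
      · have k1 : pi x = y.1 := h
        have k2 : x.1 = pi y := h'
        have l1 := hpo x
        have l2 := hpo y
        rw [k1, k2] at l1
        exact absurd l1 l2.not_gt
      · have k1 : x.1 = pi y := h
        have k2 : pi x = y.1 := h'
        have l1 := hpo x
        have l2 := hpo y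
        rw [k2, k1] at l1
        exact absurd l1 l2.not_gt
      · exact Subtype.ext h
    have G2 : ∀ x y b b', D.Crosses (g x b) (g y b') → x = y := by
      intro x y b b' h
      have := h1p (g x b) (gc x b) h
      exact G1 x y _ _ this
    have env : ∀ e b, D.pos (en e b) ∈ D.curve e '' Set.Icc 0 1 := by
      intro e b
      cases b
      · exact ⟨1, by simp, hv e⟩
      · exact ⟨0, by simp, hu e⟩
    have ven : ∀ e b w, D.pos w ∈ D.curve e '' Set.Icc 0 1 → w ≠ en e (!b) → w = en e b := by
      intro e b w h h2
      rcases vtx e w h with h | h <;> cases b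
      · exact absurd h h2
      · exact h
      · exact h
      · exact absurd h h2
    let P : V ⊕ {e // R e} → ℝ × ℝ := Sum.elim D.pos z
    have hP : Function.Injective P := by
      rintro (v | x) (w | y) h
      · exact congrArg Sum.inl (D.pos_inj h)
      · exact absurd (gz y true) ((show D.pos v = z y from h) ▸ op_int_avoid D _ v)
      · exact absurd (gz x true) ((show D.pos w = z x from h.symm) ▸ op_int_avoid D _ w)
      · by_contra hne
        have hxy : x ≠ y := fun h => hne (congrArg Sum.inr h)
        have h : z x = z y := h
        exact hxy (G2 x y true true ⟨fun k => hxy (G1 _ _ _ _ k), z x, gz x true, h ▸ gz y true⟩)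
    letI : LinearOrder (V ⊕ {e // R e}) :=
      LinearOrder.lift' (Fintype.equivFin (V ⊕ {e // R e})) (Fintype.equivFin _).injective
    obtain ⟨n, hnn⟩ := op_topR P hP
      (fun k : {e // R e} × Bool × Bool => Sum.inl (en (g k.1 k.2.1) k.2.2))
      (fun k => Sum.inr k.1)
      (fun k => D.curve (g k.1 k.2.1) '' Set.Icc 0 1 \ {D.pos (en (g k.1 k.2.1) (!k.2.2))})
      (by
        rintro ⟨x, b, c⟩
        obtain ⟨t, ht, htz⟩ := gz x b
        change JoinedIn _ (D.pos (en (g x b) c)) (z x)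
        rw [← htz]
        have ht' : t ∈ Set.Icc (0 : ℝ) 1 := ⟨ht.1.le, ht.2.le⟩
        cases c
        · have := op_joined _ (D.curve_cont (g x b)) t 1 ht' (by simp) ht.2.le
          rw [hv] at this
          refine this.symm.mono ?_
          rintro q ⟨r, hr, rfl⟩
          have hr' : r ∈ Set.Icc (0 : ℝ) 1 := ⟨ht.1.le.trans hr.1, hr.2⟩
          refine ⟨⟨r, hr', rfl⟩, ?_⟩
          intro h
          have h : D.curve (g x b) r = D.pos (uv (g x b)).1 := h
          rw [← hu] at h
          have := D.curve_inj _ hr' (by simp) h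
          linarith [hr.1, ht.1]
        · have := op_joined _ (D.curve_cont (g x b)) 0 t (by simp) ht' ht.1.le
          rw [hu] at this
          refine this.mono ?_
          rintro q ⟨r, hr, rfl⟩
          have hr' : r ∈ Set.Icc (0 : ℝ) 1 := ⟨hr.1, hr.2.trans ht.2.le⟩
          refine ⟨⟨r, hr', rfl⟩, ?_⟩
          intro h
          have h : D.curve (g x b) r = D.pos (uv (g x b)).2 := h
          rw [← hv] at h
          have := D.curve_inj _ hr' (by simp) h
          linarith [hr.2, ht.2])
      (by
        rintro ⟨x, b, c⟩ (v | y) h1 h2 ⟨h3, h4⟩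
        · exact h1 (congrArg Sum.inl (ven (g x b) c v h3 (fun h => h4 (congrArg D.pos h))))
        · have hxy : x ≠ y := fun h => h2 (congrArg Sum.inr h.symm)
          have h3 : z y ∈ D.curve (g x b) '' Set.Icc 0 1 := h3
          obtain ⟨v, hv⟩ := op_common D (g x b) (g y true) (fun k => hxy (G1 _ _ _ _ k))
            (fun k => hxy (G2 _ _ _ _ k)) (z y) h3 (op_int_sub D _ (gz y true))
          exact op_int_avoid D _ v (hv ▸ gz y true))
      (by
        rintro ⟨x, b, c⟩ ⟨y, b', c'⟩ h1 - - h2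
        have hxy : x ≠ y := fun h => h2 (congrArg Sum.inr h)
        rw [Set.disjoint_left]
        rintro q ⟨q1, q2⟩ ⟨q3, q4⟩
        obtain ⟨v, rfl⟩ := op_common D (g x b) (g y b') (fun k => hxy (G1 _ _ _ _ k))
            (fun k => hxy (G2 _ _ _ _ k)) q q1 q3
        have e1 := ven _ c v q1 (fun h => q2 (congrArg D.pos h))
        have e2 := ven _ c' v q3 (fun h => q4 (congrArg D.pos h))
        exact h1 (congrArg Sum.inl (e1.symm.trans e2)))
    obtain ⟨a, b, hab⟩ := Fintype.exists_pair_of_one_lt_card (α := V) (by omega)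
    have := op_bip _ _ (fun w : V ⊕ {e // R e} => w.isLeft) (fun _ => rfl) (fun _ => by simp) (by
      rintro ⟨x, b, c⟩ ⟨y, b', c'⟩ h1 h2
      have hxy : x = y := Sum.inr_injective h2
      subst hxy
      have h1 : en (g x b) c = en (g x b') c' := Sum.inl_injective h1
      have hb : b = b' := by
        by_contra hb
        have : b' = !b := Bool.eq_not.mpr (Ne.symm hb)
        subst this
        exact op_cross_vtx D (gc x b) _ (env _ c) (h1 ▸ env _ c')
      subst hb
      have hc : c = c' := by
        cases c <;> cases c'
        · rfl
        · exact absurd h1.symm (huvne _)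
        · exact absurd h1 (huvne _)
        · rfl
      subst hc
      rfl) n hnn (Sum.inl a) (Sum.inl b) (fun h => hab (Sum.inl_injective h)) rfl rfl
    rw [Fintype.card_sum, Fintype.card_prod, Fintype.card_prod, Fintype.card_bool] at this
    omega
  have B3 := Fintype.card_subtype_compl R
  have B4 := Fintype.card_subtype_le R
  omega

end PlanePart

/-- A simple 1-planar graph on `n ≥ 3` vertices has at most `4n − 8` edges. -/
theorem stmt_2 {V : Type*} [Fintype V] (G : SimpleGraph V) [Fintype G.edgeSet]
    (hn : 3 ≤ Fintype.card V)
    (h1p : ∃ D : SimpleDrawing G, D.IsOnePlane) :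
    G.edgeFinset.card ≤ 4 * Fintype.card V - 8 := by
  obtain ⟨D, hD⟩ := h1p
  have := op_final D hn hD
  rw [SimpleGraph.edgeFinset_card]
  omega
end

section
/- Every planar triangulation on n ≥ 3 vertices admits an orientation (a 3-orientation) of its edges in which every vertex has out-degree at most 3; in fact, internal edges can be oriented so each internal vertex has out-degree exactly 3 and outer vertices have out-degree 0 among internal edges. -/
open SimpleGraph

/-- Reversal of darts, as a permutation. -/
def dartRev {V : Type*} (G : SimpleGraph V) : Equiv.Perm G.Dart :=
  ⟨SimpleGraph.Dart.symm, SimpleGraph.Dart.symm,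
    fun d => d.symm_symm, fun d => d.symm_symm⟩

/-- The number of cycles of a permutation, counting fixed points as cycles. -/
noncomputable def numCycles {α : Type*} [Fintype α] [DecidableEq α]
    (σ : Equiv.Perm α) : ℕ :=
  σ.cycleType.card + {x : α | σ x = x}.ncard

/-- A rotation system (combinatorial embedding) on a graph: a permutation of the darts
whose orbits are exactly the sets of darts leaving a common vertex, giving the cyclic
order of the edges around each vertex. -/
structure RotationSystem {V : Type*} [Fintype V] [DecidableEq V]
    (G : SimpleGraph V) [DecidableRel G.Adj] where
  σ : Equiv.Perm G.Dart
  fst_fixed : ∀ d : G.Dart, (σ d).toProd.1 = d.toProd.1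
  orbit_eq : ∀ d d' : G.Dart, d.toProd.1 = d'.toProd.1 → σ.SameCycle d d'

/-- The face permutation of a rotation system: its orbits are the faces. -/
def RotationSystem.facePerm {V : Type*} [Fintype V] [DecidableEq V]
    {G : SimpleGraph V} [DecidableRel G.Adj] (R : RotationSystem G) :
    Equiv.Perm G.Dart :=
  R.σ * dartRev G

/-- A rotation system is planar (describes a plane graph) when it satisfies Euler's
formula: `#vertices − #edges + #faces = 2`. -/
noncomputable def RotationSystem.IsPlanar {V : Type*} [Fintype V] [DecidableEq V]
    {G : SimpleGraph V} [DecidableRel G.Adj] (R : RotationSystem G) : Prop :=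
  (Fintype.card V : ℤ) - (G.edgeFinset.card : ℤ) + (numCycles R.facePerm : ℤ) = 2

section Aux

set_option linter.unusedSectionVars false

variable {V : Type*} [Fintype V] [DecidableEq V] {G : SimpleGraph V} [DecidableRel G.Adj]

theorem aux_face (R : RotationSystem G) (d : G.Dart) : R.facePerm d = R.σ d.symm := rfl

theorem aux_sig (R : RotationSystem G) (d : G.Dart) : R.facePerm d.symm = R.σ d := by
  rw [aux_face, Dart.symm_symm]

theorem aux_fst (R : RotationSystem G) (d : G.Dart) : (R.facePerm d).fst = d.snd := by
  rw [aux_face]; exact R.fst_fixed d.symm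

theorem aux_sfst (R : RotationSystem G) (d : G.Dart) : (R.σ d).fst = d.fst := R.fst_fixed d

theorem aux_orbit (R : RotationSystem G) (P : G.Dart → Prop) (d d' : G.Dart)
    (hP : P d) (hc : ∀ e, e.fst = d.fst → P e → P (R.σ e)) (h : d.fst = d'.fst) : P d' := by
  obtain ⟨n, hn⟩ := (R.orbit_eq d d' h).exists_nat_pow_eq
  have key : ∀ n : ℕ, P ((R.σ ^ n) d) ∧ ((R.σ ^ n) d).fst = d.fst := by
    intro n
    induction n with
    | zero => exact ⟨hP, rfl⟩
    | succ k ih =>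
      rw [pow_succ', Equiv.Perm.mul_apply]
      exact ⟨hc _ ih.2 ih.1, (aux_sfst R _).trans ih.2⟩
  rw [← hn]; exact (key n).1

/-- boundary darts -/
def bd (R : RotationSystem G) (S : Finset V) : Finset G.Dart :=
  Finset.univ.filter fun d => d.fst ∉ S ∧ d.snd ∉ S ∧ (R.facePerm d).snd ∈ S

/-- incident edges -/
def inc (G : SimpleGraph V) [DecidableRel G.Adj] (S : Finset V) : Finset (Sym2 V) :=
  G.edgeFinset.filter fun e => ∃ v ∈ S, v ∈ e

/-- the face of a dart -/
def fc (R : RotationSystem G) (d : G.Dart) : Finset G.Dart :=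
  {d, R.facePerm d, R.facePerm (R.facePerm d)}

/-- darts whose face hits S -/
def dF (R : RotationSystem G) (S : Finset V) : Finset G.Dart :=
  Finset.univ.filter fun d => d.fst ∈ S ∨ d.snd ∈ S ∨ (R.facePerm d).snd ∈ S

/-- faces hitting S -/
def fS (R : RotationSystem G) (S : Finset V) : Finset (Finset G.Dart) := (dF R S).image (fc R)

theorem aux_ne (d : G.Dart) : d.fst ≠ d.snd := d.adj.ne

theorem fc_phi (R : RotationSystem G) (h3 : ∀ d, R.facePerm (R.facePerm (R.facePerm d)) = d)
    (d : G.Dart) : fc R (R.facePerm d) = fc R d := by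
  unfold fc; rw [h3]; ext x; simp only [Finset.mem_insert, Finset.mem_singleton]; tauto

theorem fc_card (R : RotationSystem G)
    (htri : ∀ d : G.Dart, R.facePerm (R.facePerm (R.facePerm d)) = d ∧ R.facePerm d ≠ d)
    (d : G.Dart) : (fc R d).card = 3 := by
  unfold fc
  rw [Finset.card_eq_three]
  refine ⟨_, _, _, (htri d).2.symm, ?_, (htri _).2.symm, rfl⟩
  intro h
  have := congrArg R.facePerm h
  rw [(htri d).1] at this
  exact (htri d).2 this

theorem dF_card (R : RotationSystem G)
    (htri : ∀ d : G.Dart, R.facePerm (R.facePerm (R.facePerm d)) = d ∧ R.facePerm d ≠ d)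
    (S : Finset V) : (dF R S).card = 3 * (fS R S).card := by
  have h3 : ∀ d, R.facePerm (R.facePerm (R.facePerm d)) = d := fun d => (htri d).1
  have hst : ∀ d, d ∈ dF R S → R.facePerm d ∈ dF R S := by
    intro d hd
    simp only [dF, Finset.mem_filter, Finset.mem_univ, true_and] at hd ⊢
    rw [aux_fst, ← aux_fst R (R.facePerm (R.facePerm d)), h3]
    tauto
  rw [Finset.card_eq_sum_card_image (fc R), mul_comm]
  apply Finset.sum_const_nat
  intro f hf
  obtain ⟨d, hd, rfl⟩ := Finset.mem_image.1 hf
  rw [← fc_card R htri d]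
  congr 1
  ext x
  simp only [Finset.mem_filter]
  constructor
  · rintro ⟨_, h⟩
    rw [← h]; simp [fc]
  · intro hx
    simp only [fc, Finset.mem_insert, Finset.mem_singleton] at hx
    rcases hx with rfl | rfl | rfl
    · exact ⟨hd, rfl⟩
    · exact ⟨hst _ hd, fc_phi R h3 _⟩
    · exact ⟨hst _ (hst _ hd), by rw [fc_phi R h3, fc_phi R h3]⟩

theorem inc_mem (S : Finset V) (d : G.Dart) : d.edge ∈ inc G S ↔ d.fst ∈ S ∨ d.snd ∈ S := by
  have : d.edge = s(d.fst, d.snd) := rfl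
  have h2 : d.edge ∈ G.edgeSet := d.edge_mem
  simp only [inc, Finset.mem_filter, mem_edgeFinset, h2, true_and]
  simp only [this, Sym2.mem_iff]
  constructor
  · rintro ⟨v, hv, rfl | rfl⟩ <;> tauto
  · rintro (h | h)
    · exact ⟨_, h, Or.inl rfl⟩
    · exact ⟨_, h, Or.inr rfl⟩

theorem inc_card (S : Finset V) :
    (Finset.univ.filter fun d : G.Dart => d.fst ∈ S ∨ d.snd ∈ S).card = 2 * (inc G S).card := by
  rw [Finset.card_eq_sum_card_fiberwise (f := Dart.edge) (t := inc G S), mul_comm]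
  · apply Finset.sum_const_nat
    intro e he
    have he' : e ∈ G.edgeSet := by
      simp only [inc, Finset.mem_filter, mem_edgeFinset] at he; exact he.1
    rw [← G.dart_edge_fiber_card e he']
    congr 1
    ext d
    simp only [Finset.mem_filter, Finset.mem_univ, true_and]
    constructor
    · exact fun h => h.2
    · rintro rfl; exact ⟨(inc_mem S d).1 he, rfl⟩
  · intro d hd
    simp only [Finset.coe_filter, Finset.mem_univ, true_and, Set.mem_ofPred_eq] at hd
    exact (inc_mem S d).2 hd

theorem dF_split (R : RotationSystem G) (S : Finset V) :
    (dF R S).card = 2 * (inc G S).card + (bd R S).card := by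
  rw [← inc_card, ← Finset.card_union_of_disjoint]
  · congr 1
    ext d
    simp only [dF, bd, Finset.mem_union, Finset.mem_filter, Finset.mem_univ, true_and]
    tauto
  · rw [Finset.disjoint_left]
    intro d
    simp only [bd, Finset.mem_filter, Finset.mem_univ, true_and]
    tauto

/-- extension by zero -/
noncomputable def ext0 {α : Type*} [DecidableEq α] (s : Finset α) : (s → ℝ) →ₗ[ℝ] (α → ℝ) where
  toFun g a := if h : a ∈ s then g ⟨a, h⟩ else 0
  map_add' x y := by ext a; by_cases h : a ∈ s <;> simp [h]
  map_smul' c x := by ext a; by_cases h : a ∈ s <;> simp [h]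

theorem ext0_mem {α : Type*} [DecidableEq α] (s : Finset α) (g : s → ℝ) (a : s) :
    ext0 s g a = g a := by simp [ext0]

theorem ext0_not {α : Type*} [DecidableEq α] (s : Finset α) (g : s → ℝ) (a : α) (h : a ∉ s) :
    ext0 s g a = 0 := by simp [ext0, h]

theorem orth (R : RotationSystem G) (h3 : ∀ d, R.facePerm (R.facePerm (R.facePerm d)) = d)
    (g : V → ℝ) (h : Finset G.Dart → ℝ) :
    ∑ d : G.Dart, (g d.snd - g d.fst) * (h (fc R d) - h (fc R d.symm)) = 0 := by
  have e1 : ∑ d : G.Dart, g d.snd * h (fc R d) = ∑ d : G.Dart, g d.fst * h (fc R d) := by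
    rw [← Equiv.sum_comp R.facePerm (fun d => g d.fst * h (fc R d))]
    apply Finset.sum_congr rfl
    intro d _
    rw [aux_fst, fc_phi R h3]
  have e2 : ∑ d : G.Dart, (g d.snd - g d.fst) * h (fc R d) = 0 := by
    simp only [sub_mul, Finset.sum_sub_distrib, e1, sub_self]
  have e3 : ∑ d : G.Dart, (g d.snd - g d.fst) * h (fc R d.symm) = 0 := by
    rw [← Equiv.sum_comp (dartRev G)]
    have : ∀ d : G.Dart, (g (dartRev G d).snd - g (dartRev G d).fst) * h (fc R (dartRev G d).symm)
        = - ((g d.snd - g d.fst) * h (fc R d)) := by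
      intro d
      have : dartRev G d = d.symm := rfl
      rw [this, Dart.symm_symm]
      have a1 : d.symm.fst = d.snd := rfl
      have a2 : d.symm.snd = d.fst := rfl
      rw [a1, a2]; ring
    simp only [this, Finset.sum_neg_distrib, e2, neg_zero]
  simp only [mul_sub, Finset.sum_sub_distrib, e2, e3, sub_self]

theorem conn_const (hconn : G.Connected) (P : V → Prop) (hP : ∀ u v, G.Adj u v → P u → P v)
    (u v : V) (hu : P u) : P v := by
  obtain ⟨p⟩ := hconn.preconnected u v
  induction p with
  | nil => exact hu
  | cons h p ih => exact ih (hP _ _ h hu)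

theorem rank_ineq (hconn : G.Connected) (R : RotationSystem G)
    (h3 : ∀ d, R.facePerm (R.facePerm (R.facePerm d)) = d)
    (S : Finset V) (x : V) (hx : x ∉ S)
    (hS : ∀ U : Finset V, U ⊆ S → U.Nonempty → (∀ u ∈ U, ∀ v ∈ S, G.Adj u v → v ∈ U) → U = S)
    (d₁ : G.Dart) (hd₁ : d₁.fst ∈ S) :
    S.card + (fS R S).card ≤ (inc G S).card + 1 := by
  have hrep : ∀ e : inc G S, ∃ d : G.Dart, d.edge = e.1 := by
    rintro ⟨e, he⟩
    simp only [inc, Finset.mem_filter, mem_edgeFinset] at he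
    have := he.1
    induction e with
    | h a b => exact ⟨⟨(a, b), this⟩, rfl⟩
  choose rep hrep using hrep
  let w : (S → ℝ) × (fS R S → ℝ) → G.Dart → ℝ := fun p d =>
    ext0 S p.1 d.snd - ext0 S p.1 d.fst + (ext0 (fS R S) p.2 (fc R d) - ext0 (fS R S) p.2 (fc R d.symm))
  let L : (S → ℝ) × (fS R S → ℝ) →ₗ[ℝ] (inc G S → ℝ) × ℝ :=
    { toFun := fun p => (fun e => w p (rep e), ext0 (fS R S) p.2 (fc R d₁))
      map_add' := by
        intro p q
        refine Prod.ext ?_ ?_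
        · ext e; simp [w]; ring
        · simp
      map_smul' := by
        intro c p
        refine Prod.ext ?_ ?_
        · ext e; simp [w]; ring
        · simp }
  have hL : Function.Injective L := by
    rw [injective_iff_map_eq_zero]
    intro p hp
    have hp1 : ∀ e, w p (rep e) = 0 := fun e => congrFun (congrArg Prod.fst hp) e
    have hp2 : ext0 (fS R S) p.2 (fc R d₁) = 0 := congrArg Prod.snd hp
    have hanti : ∀ d, w p d.symm = - w p d := by
      intro d
      have a1 : d.symm.fst = d.snd := rfl
      have a2 : d.symm.snd = d.fst := rfl
      simp only [w, a1, a2, Dart.symm_symm]; ring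
    have hw : ∀ d : G.Dart, (d.fst ∈ S ∨ d.snd ∈ S) → w p d = 0 := by
      intro d hd
      have := hrep ⟨d.edge, (inc_mem S d).2 hd⟩
      have h0 := hp1 ⟨d.edge, (inc_mem S d).2 hd⟩
      rcases (dart_edge_eq_iff _ _).1 this with h | h
      · rw [h] at h0; exact h0
      · rw [h, hanti] at h0; linarith
    set g := ext0 S p.1 with hg
    set h := ext0 (fS R S) p.2 with hh
    have hsum : ∑ d : G.Dart, (g d.snd - g d.fst) * w p d = 0 := by
      apply Finset.sum_eq_zero
      intro d _
      by_cases hd : d.fst ∈ S ∨ d.snd ∈ S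
      · rw [hw d hd, mul_zero]
      · push Not at hd
        rw [hg, ext0_not _ _ _ hd.1, ext0_not _ _ _ hd.2]; simp
    have hsq : ∑ d : G.Dart, (g d.snd - g d.fst) * (g d.snd - g d.fst) = 0 := by
      have := orth R h3 g h
      have e : ∀ d, (g d.snd - g d.fst) * w p d = (g d.snd - g d.fst) * (g d.snd - g d.fst)
        + (g d.snd - g d.fst) * (h (fc R d) - h (fc R d.symm)) := by
        intro d; simp only [w]; ring
      simp only [e, Finset.sum_add_distrib, this, add_zero] at hsum
      exact hsum
    have hdg : ∀ d : G.Dart, g d.snd - g d.fst = 0 := by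
      intro d
      have := (Finset.sum_eq_zero_iff_of_nonneg (fun d _ => mul_self_nonneg _)).1 hsq d
        (Finset.mem_univ _)
      exact mul_self_eq_zero.1 this
    have hg0 : ∀ v, g v = 0 := by
      intro v
      refine conn_const hconn (fun v => g v = 0) ?_ x v (ext0_not _ _ _ hx)
      intro u v huv hu
      have : g v - g u = 0 := hdg ⟨(u, v), huv⟩
      linarith
    have hdh : ∀ d : G.Dart, (d.fst ∈ S ∨ d.snd ∈ S) → h (fc R d) = h (fc R d.symm) := by
      intro d hd
      have h1 := hw d hd
      have h2 := hdg d
      simp only [w] at h1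
      linarith
    -- constancy around a vertex
    have hrot : ∀ d d' : G.Dart, d.fst ∈ S → d.fst = d'.fst → h (fc R d') = h (fc R d) := by
      intro d d' hd hdd
      refine aux_orbit R (fun e => h (fc R e) = h (fc R d)) d d' rfl ?_ hdd
      intro e he1 he2
      rw [← he2, ← aux_sig, fc_phi R h3]
      exact (hdh e (Or.inl (he1 ▸ hd))).symm
    classical
    have hU := hS (S.filter fun s => ∀ d : G.Dart, d.fst = s → h (fc R d) = 0)
      (Finset.filter_subset _ _) ⟨d₁.fst, by
        simp only [Finset.mem_filter]
        refine ⟨hd₁, fun d hd => ?_⟩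
        rw [hrot d₁ d hd₁ hd.symm]; exact hp2⟩ (by
        intro u hu v hv huv
        simp only [Finset.mem_filter] at hu ⊢
        refine ⟨hv, fun d hd => ?_⟩
        rw [hrot ⟨(v, u), huv.symm⟩ d hv hd.symm, hdh _ (Or.inl hv)]
        exact hu.2 _ rfl)
    have hall : ∀ d : G.Dart, d.fst ∈ S → h (fc R d) = 0 := by
      intro d hd
      rw [← hU] at hd
      exact (Finset.mem_filter.1 hd).2 d rfl
    refine Prod.ext ?_ ?_
    · ext s
      rw [← ext0_mem S p.1]; exact hg0 _
    · ext f
      rw [← ext0_mem (fS R S) p.2]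
      obtain ⟨f, hf⟩ := f
      obtain ⟨d, hd, rfl⟩ := Finset.mem_image.1 hf
      simp only [dF, Finset.mem_filter, Finset.mem_univ, true_and] at hd
      change h (fc R d) = 0
      rcases hd with hd | hd | hd
      · exact hall d hd
      · rw [← fc_phi R h3]; apply hall; rw [aux_fst]; exact hd
      · rw [← fc_phi R h3, ← fc_phi R h3]; apply hall; rw [aux_fst]; exact hd
  have := LinearMap.finrank_le_finrank_of_injective hL
  simpa using this

theorem bd_out (R : RotationSystem G) (h3 : ∀ d, R.facePerm (R.facePerm (R.facePerm d)) = d)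
    (S : Finset V) (e f : G.Dart) (hv : e.fst ∉ S) (hef : e.fst = f.fst)
    (he : e.snd ∈ S) (hf : f.snd ∉ S) : ∃ d ∈ bd R S, d.fst = e.fst := by
  by_contra hcon
  push Not at hcon
  refine hf (aux_orbit R (fun d => d.snd ∈ S) e f he ?_ hef)
  intro d hd1 hd2
  by_contra h
  refine hcon (R.σ d) ?_ ((aux_sfst R d).trans hd1)
  simp only [bd, Finset.mem_filter, Finset.mem_univ, true_and]
  refine ⟨by rw [aux_sfst, hd1]; exact hv, h, ?_⟩
  rw [← aux_fst R (R.facePerm (R.σ d)), ← aux_sig, h3]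
  exact hd2

theorem bd_card (hconn : G.Connected) (R : RotationSystem G)
    (h3 : ∀ d, R.facePerm (R.facePerm (R.facePerm d)) = d)
    (S : Finset V) (s : V) (hs : s ∈ S) (x y z : V) (hx : x ∉ S) (hy : y ∉ S) (hz : z ∉ S)
    (hxy : G.Adj x y) (hyz : G.Adj y z) (hzx : G.Adj z x) : 3 ≤ (bd R S).card := by
  by_contra hlt
  have hB : (bd R S).card ≤ 2 := by omega
  have hB3 : ∀ a b c, a ∈ bd R S → b ∈ bd R S → c ∈ bd R S → a ≠ b → b ≠ c → a = c := by
    intro a b c ha hb hc hab hbc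
    by_contra hac
    have : ({a, b, c} : Finset G.Dart) ⊆ bd R S := by
      intro t ht
      simp only [Finset.mem_insert, Finset.mem_singleton] at ht
      rcases ht with rfl | rfl | rfl <;> assumption
    have h1 := Finset.card_le_card this
    rw [Finset.card_eq_three.2 ⟨a, b, c, hab, hac, hbc, rfl⟩] at h1
    omega
  have hmem : ∀ d, d ∈ bd R S ↔ d.fst ∉ S ∧ d.snd ∉ S ∧ (R.facePerm d).snd ∈ S := by
    intro d; simp [bd]
  have hnext : ∀ d ∈ bd R S, ∃ d' ∈ bd R S, d'.fst = d.snd := by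
    intro d hd
    obtain ⟨h1, h2, h4⟩ := (hmem d).1 hd
    obtain ⟨d', hd', h⟩ := bd_out R h3 S (R.facePerm d) d.symm (by rw [aux_fst]; exact h2)
      (aux_fst R d) h4 h1
    exact ⟨d', hd', h.trans (aux_fst R d)⟩
  have hsymm : ∀ d ∈ bd R S, d.symm ∈ bd R S := by
    intro d hd
    obtain ⟨d', hd', h'⟩ := hnext d hd
    obtain ⟨d'', hd'', h''⟩ := hnext d' hd'
    have n1 : d ≠ d' := by rintro rfl; exact aux_ne d h'
    have n2 : d' ≠ d'' := by rintro rfl; exact aux_ne d' h''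
    have := hB3 _ _ _ hd hd' hd'' n1 n2
    subst this
    have : d' = d.symm := by
      apply Dart.ext
      exact Prod.ext h' h''.symm
    rw [← this]; exact hd'
  have hall : ∀ d ∈ bd R S, ∀ e ∈ bd R S, e = d ∨ e = d.symm := by
    intro d hd e he
    by_cases h : e = d.symm
    · exact Or.inr h
    · exact Or.inl (hB3 d d.symm e hd (hsymm d hd) he d.symm_ne.symm (Ne.symm h)).symm
  have honly : ∀ d ∈ bd R S, ∀ e : G.Dart, e.fst = d.fst → e.snd ∉ S → e = d := by
    intro d hd e hed heS
    by_contra hne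
    have hd' := (hmem d).1 hd
    have := aux_orbit R (fun t => t.snd ∉ S ∧ t ≠ d) e d ⟨heS, hne⟩ ?_ hed
    · exact this.2 rfl
    · intro t ht1 ⟨ht2, ht3⟩
      refine ⟨fun hS => ?_, fun h => ?_⟩
      · have : t.symm ∈ bd R S := by
          rw [hmem]
          refine ⟨ht2, ?_, ?_⟩
          · change t.fst ∉ S
            rw [ht1, hed]; exact hd'.1
          · rw [aux_sig]; exact hS
        rcases hall d hd _ this with h | h
        · have : t.symm.snd = d.snd := by rw [h]
          have h5 : t.fst = d.snd := this
          exact aux_ne d (by rw [← h5, ht1, hed])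
        · apply ht3
          rw [← t.symm_symm, h, Dart.symm_symm]
      · apply ht2
        have := hd'.2.2
        rw [← h, ← aux_sig, ← aux_fst, h3] at this
        exact this
  have hW : ∀ w u : V, G.Adj w u → (w ∉ S ∧ ∀ v, G.Adj w v → v ∉ S) →
      (u ∉ S ∧ ∀ v, G.Adj u v → v ∉ S) := by
    intro w u hwu ⟨hw1, hw2⟩
    have hu := hw2 u hwu
    refine ⟨hu, fun v huv hv => ?_⟩
    obtain ⟨d, hd, hdu⟩ := bd_out R h3 S ⟨(u, v), huv⟩ ⟨(u, w), hwu.symm⟩ hu rfl hv hw1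
    have h1 := honly d hd ⟨(u, w), hwu.symm⟩ hdu.symm hw1
    have h2 := (hmem _).1 (hsymm d hd)
    rw [← h1] at h2
    refine hw2 _ ?_ h2.2.2
    have h4 : G.Adj (R.facePerm (R.facePerm (Dart.symm ⟨(u, w), hwu.symm⟩))).fst
      (R.facePerm (R.facePerm (Dart.symm ⟨(u, w), hwu.symm⟩))).snd := Dart.adj _
    rw [← aux_fst R (R.facePerm (R.facePerm _)), h3, aux_fst R (R.facePerm _)] at h4
    exact h4.symm
  have hWe : ∀ w, w ∉ S → ∃ v, G.Adj w v ∧ v ∈ S := by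
    intro w hw
    by_contra hc
    push Not at hc
    exact (conn_const hconn (fun w => w ∉ S ∧ ∀ v, G.Adj w v → v ∉ S) (fun u v => hW u v) w s
      ⟨hw, hc⟩).1 hs
  have hout : ∀ p q, G.Adj p q → p ∉ S → q ∉ S → ∃ d ∈ bd R S, d.fst = p := by
    intro p q hpq hp hq
    obtain ⟨v, hv, hvS⟩ := hWe p hp
    exact bd_out R h3 S ⟨(p, v), hv⟩ ⟨(p, q), hpq⟩ hp rfl hvS hq
  obtain ⟨a, ha, ha'⟩ := hout x y hxy hx hy
  obtain ⟨b, hb, hb'⟩ := hout y z hyz hy hz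
  obtain ⟨c, hc, hc'⟩ := hout z x hzx hz hx
  have := hB3 a b c ha hb hc (by rintro rfl; exact hxy.ne (ha'.symm.trans hb'))
    (by rintro rfl; exact hyz.ne (hb'.symm.trans hc'))
  subst this
  exact hzx.ne (hc'.symm.trans ha')

theorem hall_ineq (hconn : G.Connected) (R : RotationSystem G)
    (htri : ∀ d : G.Dart, R.facePerm (R.facePerm (R.facePerm d)) = d ∧ R.facePerm d ≠ d)
    (x y z : V) (hxy : G.Adj x y) (hyz : G.Adj y z) (hzx : G.Adj z x)
    (n : ℕ) (S : Finset V) (hn : S.card = n) (hx : x ∉ S) (hy : y ∉ S) (hz : z ∉ S) :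
    3 * S.card ≤ (inc G S).card := by
  induction n using Nat.strong_induction_on generalizing S with
  | _ n ih =>
  have h3 : ∀ d, R.facePerm (R.facePerm (R.facePerm d)) = d := fun d => (htri d).1
  rcases S.eq_empty_or_nonempty with rfl | ⟨s, hs⟩
  · simp
  by_cases hS : ∀ U : Finset V, U ⊆ S → U.Nonempty →
      (∀ u ∈ U, ∀ v ∈ S, G.Adj u v → v ∈ U) → U = S
  · have hb := bd_card hconn R h3 S s hs x y z hx hy hz hxy hyz hzx
    have hd : ∃ d : G.Dart, d.fst = s := by
      by_contra hc
      push Not at hc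
      have := conn_const hconn (fun v => v = s)
        (fun u v huv hu => (hc ⟨(u, v), huv⟩ hu).elim) s x rfl
      exact hx (this ▸ hs)
    obtain ⟨d, hd⟩ := hd
    have h1 := rank_ineq hconn R h3 S x hx hS d (hd ▸ hs)
    have h2 := dF_card R htri S
    have h4 := dF_split R S
    omega
  · push Not at hS
    obtain ⟨U, hUS, hU, hcl, hne⟩ := hS
    have c1 : U.card < S.card := Finset.card_lt_card (hUS.ssubset_of_ne hne)
    have c2 : (S \ U).card + U.card = S.card := Finset.card_sdiff_add_card_eq_card hUS
    have c3 := hU.card_pos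
    have i1 := ih U.card (by omega) U rfl (fun h => hx (hUS h)) (fun h => hy (hUS h))
      (fun h => hz (hUS h))
    have i2 := ih (S \ U).card (by omega) (S \ U) rfl (fun h => hx (Finset.mem_sdiff.1 h).1)
      (fun h => hy (Finset.mem_sdiff.1 h).1) (fun h => hz (Finset.mem_sdiff.1 h).1)
    have hdis : Disjoint (inc G U) (inc G (S \ U)) := by
      rw [Finset.disjoint_left]
      intro e h1 h2
      simp only [inc, Finset.mem_filter, mem_edgeFinset, Finset.mem_sdiff] at h1 h2
      obtain ⟨he, u, hu, hue⟩ := h1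
      obtain ⟨_, v, ⟨hv, hvU⟩, hve⟩ := h2
      have huv : u ≠ v := by rintro rfl; exact hvU hu
      have := (Sym2.mem_and_mem_iff huv).1 ⟨hue, hve⟩
      rw [this] at he
      exact hvU (hcl u hu v hv he)
    have hsub : inc G U ∪ inc G (S \ U) ⊆ inc G S := by
      intro e he
      simp only [inc, Finset.mem_union, Finset.mem_filter, Finset.mem_sdiff] at he ⊢
      rcases he with ⟨h, u, hu, hue⟩ | ⟨h, u, hu, hue⟩
      · exact ⟨h, u, hUS hu, hue⟩
      · exact ⟨h, u, hu.1, hue⟩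
    have := Finset.card_le_card hsub
    rw [Finset.card_union_of_disjoint hdis] at this
    omega

theorem edge_count (R : RotationSystem G) (hplanar : R.IsPlanar)
    (htri : ∀ d : G.Dart, R.facePerm (R.facePerm (R.facePerm d)) = d ∧ R.facePerm d ≠ d) :
    G.edgeFinset.card + 6 = 3 * Fintype.card V := by
  have h1 : {d : G.Dart | R.facePerm d = d}.ncard = 0 := by
    have : {d : G.Dart | R.facePerm d = d} = ∅ := by
      ext d; simpa using (htri d).2
    rw [this, Set.ncard_empty]
  have h2 : R.facePerm.cycleType.sum = 2 * G.edgeFinset.card := by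
    rw [Equiv.Perm.sum_cycleType, ← G.dart_card_eq_twice_card_edges, ← Finset.card_univ]
    congr 1
    ext d
    simpa using (htri d).2
  have h3 : ∀ n ∈ R.facePerm.cycleType, n = 3 := by
    intro n hn
    have a := Equiv.Perm.two_le_of_mem_cycleType hn
    have b := Equiv.Perm.dvd_of_mem_cycleType hn
    have c : orderOf R.facePerm ∣ 3 := by
      apply orderOf_dvd_of_pow_eq_one
      ext1 d
      exact (htri d).1
    rcases (Nat.dvd_prime Nat.prime_three).1 (b.trans c) with h | h
    · omega
    · exact h
  have h4 := Multiset.eq_replicate_of_mem h3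
  rw [h4, Multiset.sum_replicate, smul_eq_mul] at h2
  unfold RotationSystem.IsPlanar numCycles at hplanar
  rw [h1] at hplanar
  push_cast at hplanar
  omega

end Aux

set_option maxHeartbeats 1000000 in
/-- Schnyder's theorem on 3-orientations. Let `G` be a planar triangulation on `n ≥ 3`
vertices, given by a planar rotation system `R` in which every face is a triangle, with
outer face the face of the dart `d₀`. Then `G` admits an orientation `ori` of its edges
in which every vertex has out-degree at most 3; in fact the internal edges can be
oriented so that each internal vertex has out-degree exactly 3 and the outer vertices
have out-degree 0 among internal edges. -/
theorem stmt_14 {V : Type*} [Fintype V] [DecidableEq V]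
    (G : SimpleGraph V) [DecidableRel G.Adj]
    (hn : 3 ≤ Fintype.card V) (hconn : G.Connected)
    (R : RotationSystem G) (hplanar : R.IsPlanar)
    (htri : ∀ d : G.Dart, R.facePerm (R.facePerm (R.facePerm d)) = d ∧ R.facePerm d ≠ d)
    (d₀ : G.Dart) :
    ∃ ori : G.Dart → Prop,
      (∀ d : G.Dart, ori d ↔ ¬ ori d.symm) ∧
      (∀ v : V, {d : G.Dart | d.toProd.1 = v ∧ ori d}.ncard ≤ 3) ∧
      (∀ v : V, (¬ ∃ d : G.Dart, R.facePerm.SameCycle d₀ d ∧ d.toProd.1 = v) →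
        {d : G.Dart | d.toProd.1 = v ∧ ori d ∧
          ¬ R.facePerm.SameCycle d₀ d ∧ ¬ R.facePerm.SameCycle d₀ d.symm}.ncard = 3) ∧
      (∀ v : V, (∃ d : G.Dart, R.facePerm.SameCycle d₀ d ∧ d.toProd.1 = v) →
        {d : G.Dart | d.toProd.1 = v ∧ ori d ∧
          ¬ R.facePerm.SameCycle d₀ d ∧ ¬ R.facePerm.SameCycle d₀ d.symm}.ncard = 0) := by
  
  classical
  have h3 : ∀ d, R.facePerm (R.facePerm (R.facePerm d)) = d := fun d => (htri d).1
  have hsc : ∀ d, R.facePerm.SameCycle d₀ d ↔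
      d = d₀ ∨ d = R.facePerm d₀ ∨ d = R.facePerm (R.facePerm d₀) := by
    intro d
    constructor
    · intro h
      obtain ⟨n, hn⟩ := h.exists_nat_pow_eq
      rw [← hn]
      clear hn
      induction n with
      | zero => exact Or.inl rfl
      | succ k ih =>
        rw [pow_succ', Equiv.Perm.mul_apply]
        rcases ih with h | h | h <;> rw [h]
        · exact Or.inr (Or.inl rfl)
        · exact Or.inr (Or.inr rfl)
        · exact Or.inl (h3 _)
    · rintro (rfl | rfl | rfl)
      · exact Equiv.Perm.SameCycle.refl _ _
      · exact ⟨1, rfl⟩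
      · exact ⟨2, rfl⟩
  let x := d₀.fst
  let y := (R.facePerm d₀).fst
  let z := (R.facePerm (R.facePerm d₀)).fst
  have a1 : d₀.snd = y := (aux_fst R d₀).symm
  have a2 : (R.facePerm d₀).snd = z := (aux_fst R _).symm
  have a3 : (R.facePerm (R.facePerm d₀)).snd = x := by
    rw [← aux_fst R, h3]
  have hxy : G.Adj x y := by rw [← a1]; exact d₀.adj
  have hyz : G.Adj y z := by rw [← a2]; exact Dart.adj _
  have hzx : G.Adj z x := by rw [← a3]; exact Dart.adj _
  let O : Finset V := {x, y, z}
  have hOc : O.card = 3 := Finset.card_eq_three.2 ⟨x, y, z, hxy.ne, hzx.ne.symm, hyz.ne, rfl⟩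
  have hO : ∀ v, (∃ d : G.Dart, R.facePerm.SameCycle d₀ d ∧ d.toProd.1 = v) ↔ v ∈ O := by
    intro v
    simp only [O, Finset.mem_insert, Finset.mem_singleton]
    constructor
    · rintro ⟨d, hd, rfl⟩
      rcases (hsc d).1 hd with rfl | rfl | rfl
      · exact Or.inl rfl
      · exact Or.inr (Or.inl rfl)
      · exact Or.inr (Or.inr rfl)
    · rintro (rfl | rfl | rfl)
      · exact ⟨_, (hsc _).2 (Or.inl rfl), rfl⟩
      · exact ⟨_, (hsc _).2 (Or.inr (Or.inl rfl)), rfl⟩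
      · exact ⟨_, (hsc _).2 (Or.inr (Or.inr rfl)), rfl⟩
  have hscO : ∀ d : G.Dart, R.facePerm.SameCycle d₀ d → d.fst ∈ O ∧ d.snd ∈ O := by
    intro d hd
    refine ⟨(hO _).1 ⟨d, hd, rfl⟩, (hO _).1 ⟨R.facePerm d, ?_, aux_fst R d⟩⟩
    exact hd.trans ⟨1, rfl⟩
  have hsymm : ∀ d : G.Dart, R.facePerm.SameCycle d₀ d → ¬ R.facePerm.SameCycle d₀ d.symm := by
    intro d hd hds
    have hy : ∀ d e : G.Dart, d.symm = e → d.fst = e.snd ∧ d.snd = e.fst := by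
      rintro d e rfl; exact ⟨rfl, rfl⟩
    have n1 := hxy.ne
    have n2 := hyz.ne
    have n3 := hzx.ne
    have b1 : d₀.fst = x := rfl
    have b2 : (R.facePerm d₀).fst = y := rfl
    have b3 : (R.facePerm (R.facePerm d₀)).fst = z := rfl
    rcases (hsc d).1 hd with h | h | h <;> rcases (hsc _).1 hds with h' | h' | h' <;>
      · have := hy _ _ h'
        rw [h] at this
        simp only [a1, a2, a3, b1, b2, b3] at this
        obtain ⟨t1, t2⟩ := this
        first
        | exact n1 t1 | exact n2 t1 | exact n3 t1 | exact n1 t1.symm | exact n2 t1.symm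
        | exact n3 t1.symm | exact n1 t2 | exact n2 t2 | exact n3 t2 | exact n1 t2.symm
        | exact n2 t2.symm | exact n3 t2.symm
  -- Hall
  let ι := {v : V // v ∉ O} × Fin 3
  obtain ⟨f, hfi, hf⟩ := (Finset.all_card_le_biUnion_card_iff_exists_injective
    (fun p : ι => inc G {p.1.1})).1 (by
      intro A
      let S : Finset V := A.image (fun p => p.1.1)
      have hSO : ∀ v ∈ S, v ∉ O := by
        intro v hv
        obtain ⟨p, _, rfl⟩ := Finset.mem_image.1 hv
        exact p.1.2
      have e1 := hall_ineq hconn R htri x y z hxy hyz hzx S.card S rfl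
        (fun h => hSO _ h (by simp [O])) (fun h => hSO _ h (by simp [O]))
        (fun h => hSO _ h (by simp [O]))
      have e2 : A.card ≤ (S ×ˢ (Finset.univ : Finset (Fin 3))).card := by
        apply Finset.card_le_card_of_injOn (fun p => (p.1.1, p.2))
        · intro p hp
          simp only [Finset.coe_product, Set.mem_prod, Finset.mem_coe, Finset.mem_univ, and_true]
          exact Finset.mem_image.2 ⟨p, hp, rfl⟩
        · intro p _ q _ h
          simp only [Prod.mk.injEq] at h
          exact Prod.ext (Subtype.ext h.1) h.2
      rw [Finset.card_product, Finset.card_univ, Fintype.card_fin] at e2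
      have e3 : inc G S ⊆ A.biUnion (fun p : ι => inc G {p.1.1}) := by
        intro e he
        simp only [inc, Finset.mem_filter] at he
        obtain ⟨he, v, hv, hve⟩ := he
        obtain ⟨p, hp, rfl⟩ := Finset.mem_image.1 hv
        refine Finset.mem_biUnion.2 ⟨p, hp, ?_⟩
        simp only [inc, Finset.mem_filter]
        exact ⟨he, _, Finset.mem_singleton_self _, hve⟩
      have := Finset.card_le_card e3
      omega)
  have hf1 : ∀ p, f p ∈ G.edgeFinset ∧ p.1.1 ∈ f p := by
    intro p
    have := hf p
    simp only [inc, Finset.mem_filter, Finset.mem_singleton, exists_eq_left] at this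
    exact this
  let EO : Finset (Sym2 V) := {s(x, y), s(y, z), s(z, x)}
  have hEOc : EO.card = 3 := by
    have n1 := hxy.ne
    have n2 := hyz.ne
    have n3 := hzx.ne
    refine Finset.card_eq_three.2 ⟨_, _, _, ?_, ?_, ?_, rfl⟩ <;>
    · intro h
      rw [Sym2.eq_iff] at h
      grind
  have hEOs : EO ⊆ G.edgeFinset := by
    intro e he
    simp only [EO, Finset.mem_insert, Finset.mem_singleton] at he
    rw [mem_edgeFinset]
    rcases he with rfl | rfl | rfl
    · exact hxy
    · exact hyz
    · exact hzx
  have hEOm : ∀ d : G.Dart, d.edge ∈ EO →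
      R.facePerm.SameCycle d₀ d ∨ R.facePerm.SameCycle d₀ d.symm := by
    intro d hd
    have key : ∀ e : G.Dart, R.facePerm.SameCycle d₀ e → d.edge = e.edge →
        R.facePerm.SameCycle d₀ d ∨ R.facePerm.SameCycle d₀ d.symm := by
      intro e he h
      rcases (dart_edge_eq_iff _ _).1 h with h | h
      · left; rw [h]; exact he
      · right; rw [h, Dart.symm_symm]; exact he
    have ed : ∀ e : G.Dart, e.edge = s(e.fst, e.snd) := fun _ => rfl
    simp only [EO, Finset.mem_insert, Finset.mem_singleton] at hd
    rcases hd with h | h | h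
    · exact key d₀ ((hsc _).2 (Or.inl rfl)) (by rw [h, ed, a1])
    · exact key _ ((hsc _).2 (Or.inr (Or.inl rfl))) (by rw [h, ed, a2])
    · exact key _ ((hsc _).2 (Or.inr (Or.inr rfl))) (by rw [h, ed, a3])
  have hEO2 : ∀ e ∈ EO, ∀ v ∈ e, v ∈ O := by
    intro e he v hv
    simp only [EO, Finset.mem_insert, Finset.mem_singleton] at he
    simp only [O, Finset.mem_insert, Finset.mem_singleton]
    rcases he with rfl | rfl | rfl <;> rw [Sym2.mem_iff] at hv <;> tauto
  have himg : Finset.univ.image f = G.edgeFinset \ EO := by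
    apply Finset.eq_of_subset_of_card_le
    · intro e he
      obtain ⟨p, _, rfl⟩ := Finset.mem_image.1 he
      refine Finset.mem_sdiff.2 ⟨(hf1 p).1, fun h => p.1.2 (hEO2 _ h _ (hf1 p).2)⟩
    · rw [Finset.card_image_of_injective _ hfi, Finset.card_sdiff_of_subset hEOs, hEOc,
        Finset.card_univ, Fintype.card_prod, Fintype.card_fin,
        Fintype.card_subtype_compl (fun v => v ∈ O), Fintype.card_coe, hOc]
      have := edge_count R hplanar htri
      omega
  let out : G.Dart → Prop := fun d => ∃ p : ι, p.1.1 = d.fst ∧ f p = d.edge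
  have houtO : ∀ d, out d → d.fst ∉ O := by
    rintro d ⟨p, hp, _⟩; rw [← hp]; exact p.1.2
  have hout_int : ∀ d, out d →
      ¬ R.facePerm.SameCycle d₀ d ∧ ¬ R.facePerm.SameCycle d₀ d.symm := by
    intro d hd
    exact ⟨fun h => houtO d hd (hscO _ h).1, fun h => houtO d hd (hscO _ h).2⟩
  have hcard : ∀ v, v ∉ O → {d : G.Dart | d.fst = v ∧ out d}.ncard = 3 := by
    intro v hv
    have hex : ∀ i : Fin 3, ∃ d : G.Dart, d.fst = v ∧ d.edge = f (⟨v, hv⟩, i) := by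
      intro i
      obtain ⟨h1, h2⟩ := hf1 (⟨v, hv⟩, i)
      obtain ⟨u, hu⟩ := Sym2.mem_iff_exists.1 h2
      rw [mem_edgeFinset, hu] at h1
      exact ⟨⟨(v, u), h1⟩, rfl, hu.symm⟩
    choose e he1 he2 using hex
    have : {d : G.Dart | d.fst = v ∧ out d} = e '' Set.univ := by
      ext d
      constructor
      · rintro ⟨hd, ⟨⟨u, hu⟩, i⟩, hp, hfp⟩
        have huv : u = v := hp.trans hd
        subst huv
        refine ⟨i, trivial, ?_⟩
        have h5 := (he2 i).trans hfp
        rcases (dart_edge_eq_iff _ _).1 h5 with h | h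
        · exact h
        · exfalso
          have h6 : (e i).fst = d.snd := by rw [h]; rfl
          exact aux_ne d (by rw [hd, ← h6, he1])
      · rintro ⟨i, _, rfl⟩
        exact ⟨he1 i, (⟨v, hv⟩, i), (he1 i).symm, (he2 i).symm⟩
    rw [this, Set.ncard_image_of_injective]
    · simp
    · intro i j hij
      have : f (⟨v, hv⟩, i) = f (⟨v, hv⟩, j) := by rw [← he2, ← he2, hij]
      exact (Prod.ext_iff.1 (hfi this)).2
  refine ⟨fun d => R.facePerm.SameCycle d₀ d ∨ out d, ?_, ?_, ?_, ?_⟩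
  · intro d
    change (R.facePerm.SameCycle d₀ d ∨ out d) ↔ ¬ (R.facePerm.SameCycle d₀ d.symm ∨ out d.symm)
    by_cases h1 : R.facePerm.SameCycle d₀ d
    · have : ¬ out d.symm := fun h => houtO _ h (hscO d h1).2
      have h5 := hsymm d h1
      exact ⟨fun _ h => h.elim h5 this, fun _ => Or.inl h1⟩
    by_cases h2 : R.facePerm.SameCycle d₀ d.symm
    · have : ¬ out d := fun h => houtO _ h (hscO _ h2).2
      exact ⟨fun h => (h.elim h1 this).elim, fun h => (h (Or.inl h2)).elim⟩
    have hd : d.edge ∈ Finset.univ.image f := by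
      rw [himg, Finset.mem_sdiff, mem_edgeFinset]
      refine ⟨d.edge_mem, fun h => ?_⟩
      exact (hEOm d h).elim h1 h2
    obtain ⟨p, _, hp⟩ := Finset.mem_image.1 hd
    have hpm := (hf1 p).2
    rw [hp] at hpm
    have hpm' : p.1.1 = d.fst ∨ p.1.1 = d.snd := Sym2.mem_iff.1 hpm
    have hor : out d ∨ out d.symm := by
      rcases hpm' with h | h
      · exact Or.inl ⟨p, h, hp⟩
      · exact Or.inr ⟨p, h, by rw [hp, Dart.edge_symm]⟩
    have hnot : ¬ (out d ∧ out d.symm) := by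
      rintro ⟨⟨p, hp1, hp2⟩, ⟨q, hq1, hq2⟩⟩
      rw [Dart.edge_symm] at hq2
      have := hfi (hp2.trans hq2.symm)
      subst this
      exact aux_ne d (hp1.symm.trans hq1)
    simp only [h1, h2, false_or]
    exact ⟨fun a b => hnot ⟨a, b⟩, fun a => hor.resolve_right a⟩
  · intro v
    by_cases hv : v ∈ O
    · refine le_trans (Set.ncard_le_ncard (t := ((fc R d₀ : Finset G.Dart) : Set G.Dart)) ?_
        (Finset.finite_toSet _)) ?_
      · rintro d ⟨hd, h | h⟩
        · have := (hsc d).1 h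
          simpa [fc] using this
        · exact (houtO d h (by rw [← hd] at hv; exact hv)).elim
      · rw [Set.ncard_coe_finset, fc_card R htri]
    · rw [← hcard v hv]
      apply Set.ncard_le_ncard _ (Set.toFinite _)
      rintro d ⟨hd, h | h⟩
      · exact (hv (by rw [← hd]; exact (hscO d h).1)).elim
      · exact ⟨hd, h⟩
  · intro v hv
    rw [hO] at hv
    rw [← hcard v hv]
    congr 1
    ext d
    constructor
    · rintro ⟨hd, h | h, h1, h2⟩
      · exact (h1 h).elim
      · exact ⟨hd, h⟩
    · rintro ⟨hd, h⟩
      exact ⟨hd, Or.inr h, hout_int d h⟩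
  · intro v hv
    rw [hO] at hv
    rw [Set.ncard_eq_zero (Set.toFinite _)]
    ext d
    constructor
    · rintro ⟨hd, h | h, h1, h2⟩
      · exact (h1 h).elim
      · exact (houtO d h (by rw [← hd] at hv; exact hv)).elim
    · intro h; exact h.elim
end
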